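/- There exists a constant c ∈ ℕ such that for every 2-VASS V = (Q,T) and all configurations p(u), q(v) with u,v ∈ ℕ²: if p(u) →*_{ℕ²} q(v), then there exists a word π ∈ T* with p(u) →^π_{ℕ²} q(v) and |π| ≤ 2^{(|Q| + |T| + log₂(‖T‖+2) + log₂(‖u‖+2) + log₂(‖v‖+2))^c}. -/

import Mathlib

namespace VASS

/-- Integer vectors of dimension `d`. -/
abbrev Vec (d : ℕ) := Fin d → ℤ

/-- A transition of a `d`-VASS: source state, update vector, target state. -/
abbrev Trans (d : ℕ) := ℕ × Vec d × ℕ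

/-- The norm of a vector: maximum of absolute values of its components. -/
def vnorm {d : ℕ} (z : Vec d) : ℕ := Finset.univ.sup fun i => (z i).natAbs

/-- The norm of a transition set. -/
def tnorm {d : ℕ} (T : Finset (Trans d)) : ℕ := T.sup fun t => vnorm t.2.1

/-- The displacement of a word of transitions. -/
def disp {d : ℕ} (π : List (Trans d)) : Vec d := (π.map fun t => t.2.1).sum

/-- `IsPathFrom p q π` : `π` is a path from `p` to `q`. -/
def IsPathFrom {d : ℕ} : ℕ → ℕ → List (Trans d) → Prop
  | p, q, [] => p = q
  | p, q, t :: rest => t.1 = p ∧ IsPathFrom t.2.2 q rest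

/-- ℕ^d as a subset of ℤ^d. -/
def NatSet (d : ℕ) : Set (Vec d) := {v | ∀ i, 0 ≤ v i}

/-- `p(u) →^π_A q(v)`. -/
def Run {d : ℕ} (T : Finset (Trans d)) (A : Set (Vec d)) (p : ℕ) (u : Vec d)
    (q : ℕ) (v : Vec d) (π : List (Trans d)) : Prop :=
  (∀ t ∈ π, t ∈ T) ∧ IsPathFrom p q π ∧ u ∈ A ∧ v = u + disp π ∧
    ∀ i, 1 ≤ i → i ≤ π.length → u + disp (π.take i) ∈ A

/-- `p(u) →*_A q(v)`. -/
def Reach {d : ℕ} (T : Finset (Trans d)) (A : Set (Vec d)) (p : ℕ) (u : Vec d)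
    (q : ℕ) (v : Vec d) : Prop := ∃ π, Run T A p u q v π

/-- A linear path scheme `α₀ β₁* α₁ ⋯ β_k* α_k`, presented as the initial
segment `α₀` together with the list of pairs `(βᵢ, αᵢ)`. -/
abbrev LPS (d : ℕ) := List (Trans d) × List (List (Trans d) × List (Trans d))

/-- The underlying word `α₀ β₁ α₁ ⋯ β_k α_k` of a linear path scheme. -/
def lpsSupport {d : ℕ} (ρ : LPS d) : List (Trans d) :=
  ρ.1 ++ (ρ.2.map fun s => s.1 ++ s.2).flatten

/-- The length of a linear path scheme. -/
def lpsLen {d : ℕ} (ρ : LPS d) : ℕ := (lpsSupport ρ).length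

/-- The number of cycles of a linear path scheme. -/
def numCycles {d : ℕ} (ρ : LPS d) : ℕ := ρ.2.length

/-- `ρ` is a linear path scheme from `p` to `q` over the transition set `T`:
its underlying word uses transitions from `T` and is a path from `p` to `q`,
and each `βᵢ` is a cycle. -/
def IsLPSFrom {d : ℕ} (T : Finset (Trans d)) (p q : ℕ) (ρ : LPS d) : Prop :=
  (∀ t ∈ lpsSupport ρ, t ∈ T) ∧ IsPathFrom p q (lpsSupport ρ) ∧
    ∀ s ∈ ρ.2, s.1 ≠ [] ∧ ∃ r, IsPathFrom r r s.1

/-- The word `α₀ β₁^{e₁} α₁ ⋯ β_k^{e_k} α_k` of a linear path scheme. -/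
def lpsWord {d : ℕ} (ρ : LPS d) (e : List ℕ) : List (Trans d) :=
  ρ.1 ++ (List.zipWith (fun s n => (List.replicate n s.1).flatten ++ s.2) ρ.2 e).flatten

/-- Membership in the language of a linear path scheme. -/
def InLang {d : ℕ} (ρ : LPS d) (π : List (Trans d)) : Prop :=
  ∃ e : List ℕ, e.length = numCycles ρ ∧ π = lpsWord ρ e

/-- `p(u) →^S_A q(v)` for a finite set `S` of linear path schemes. -/
def SReach {d : ℕ} (T : Finset (Trans d)) (S : Finset (LPS d)) (A : Set (Vec d))
    (p : ℕ) (u : Vec d) (q : ℕ) (v : Vec d) : Prop :=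
  ∃ ρ ∈ S, ∃ π, InLang ρ π ∧ Run T A p u q v π

/-- δ(ρ): the set of displacements of words in the language of `ρ`. -/
def DispSet {d : ℕ} (ρ : LPS d) : Set (Vec d) := {z | ∃ π, InLang ρ π ∧ z = disp π}

/-- A quadrant of ℤ². -/
def IsQuadrant (Z : Set (Vec 2)) : Prop :=
  ∃ ε : Fin 2 → Bool, Z = {v | ∀ i, if ε i then 0 ≤ v i else v i ≤ 0}

/-- A linear path scheme is zigzag-free if the displacements of all its cycles
lie in a single quadrant. -/
def ZigzagFree (ρ : LPS 2) : Prop :=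
  ∃ Z, IsQuadrant Z ∧ ∀ s ∈ ρ.2, disp s.1 ∈ Z

section
/-- integer plane -/
abbrev V2 := ℤ × ℤ

/-- sup-norm bound -/
def nb (z : V2) (b : ℕ) : Prop := |z.1| ≤ (b : ℤ) ∧ |z.2| ≤ (b : ℤ)

lemma nb_zero (b : ℕ) : nb 0 b := by simp [nb]

lemma nb_add {x y : V2} {a b : ℕ} (hx : nb x a) (hy : nb y b) : nb (x + y) (a + b) := by
  obtain ⟨h1, h2⟩ := hx
  obtain ⟨h3, h4⟩ := hy
  constructor
  · push_cast
    exact (abs_add_le _ _).trans (add_le_add h1 h3)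
  · push_cast
    exact (abs_add_le _ _).trans (add_le_add h2 h4)

lemma nb_mono {x : V2} {a b : ℕ} (hx : nb x a) (h : a ≤ b) : nb x b := by
  obtain ⟨h1, h2⟩ := hx
  have : (a : ℤ) ≤ b := by exact_mod_cast h
  exact ⟨h1.trans this, h2.trans this⟩

section walks
variable {α : Type} [DecidableEq α]

/-- Walks with displacement, length and set of visited vertices. -/
inductive Wk (E : α → V2 → α → Prop) : α → α → V2 → ℕ → Finset α → Prop
  | nil (p : α) : Wk E p p 0 0 {p}
  | snoc {p q : α} {z : V2} {L : ℕ} {S : Finset α} {e : V2} {r : α} :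
      Wk E p q z L S → E q e r → Wk E p r (z + e) (L + 1) (insert r S)

variable {E : α → V2 → α → Prop}

lemma Wk.end_mem {p q z L S} (h : Wk E p q z L S) : q ∈ S := by
  cases h <;> simp

lemma Wk.start_mem {p q z L S} (h : Wk E p q z L S) : p ∈ S := by
  induction h <;> simp [*]

lemma Wk.card_le {p q z L S} (h : Wk E p q z L S) : S.card ≤ L + 1 := by
  induction h with
  | nil => simp
  | snoc h e ih => exact (Finset.card_insert_le _ _).trans (by omega)

lemma Wk.append {p q r z z' L L' S S'} (h : Wk E p q z L S) (h' : Wk E q r z' L' S') :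
    Wk E p r (z + z') (L + L') (S ∪ S') := by
  induction h' with
  | nil =>
    have : S ∪ {q} = S := by
      rw [Finset.union_eq_left]; simpa using h.end_mem
    simpa [this] using h
  | snoc h1 e ih =>
    have := ih.snoc e
    rw [← add_assoc, ← add_assoc, Finset.union_insert]
    exact this

lemma Wk.split {p q z L S r} (h : Wk E p q z L S) (hr : r ∈ S) :
    ∃ z1 z2 L1 L2 S1 S2, Wk E p r z1 L1 S1 ∧ Wk E r q z2 L2 S2 ∧
      z1 + z2 = z ∧ L1 + L2 = L ∧ S1 ∪ S2 = S := by
  induction h with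
  | nil =>
    have : r = p := by simpa using hr
    subst this
    exact ⟨0, 0, 0, 0, {r}, {r}, .nil r, .nil r, by simp, rfl, by simp⟩
  | @snoc q z L S e r' h1 he ih =>
    by_cases hS : r ∈ S
    · obtain ⟨z1, z2, L1, L2, S1, S2, w1, w2, rfl, rfl, rfl⟩ := ih hS
      exact ⟨z1, z2 + e, L1, L2 + 1, S1, insert r' S2, w1, w2.snoc he, by abel, by omega,
        by rw [Finset.union_insert]⟩
    · have : r = r' := by
        rcases Finset.mem_insert.1 hr with h | h
        · exact h
        · exact absurd h hS
      subst this
      exact ⟨z + e, 0, L + 1, 0, insert r S, {r}, h1.snoc he, .nil r, by simp, by simp,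
        by rw [Finset.union_eq_left]; simp⟩

lemma Wk.disp {M : ℕ} (hE : ∀ p e q, E p e q → nb e M) {p q z L S} (h : Wk E p q z L S) :
    nb z (L * M) := by
  induction h with
  | nil => exact nb_zero _
  | snoc h1 he ih =>
    have := nb_add ih (hE _ _ _ he)
    rwa [Nat.succ_mul]

lemma Wk.sub {Q : Finset α} (hE : ∀ p e q, E p e q → q ∈ Q) {p q z L S} (h : Wk E p q z L S)
    (hp : p ∈ Q) : S ⊆ Q := by
  induction h with
  | nil => simpa using hp
  | snoc h1 he ih =>
    exact Finset.insert_subset (hE _ _ _ he) ih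

/-- `c` is the displacement of a cycle of length at most `N` through a vertex of `S` -/
def IsCyc (E : α → V2 → α → Prop) (N : ℕ) (S : Finset α) (c : V2) : Prop :=
  ∃ r ∈ S, ∃ ℓ ≤ N, ∃ S', Wk E r r c ℓ S'

lemma IsCyc.mono {N : ℕ} {S S' : Finset α} {c : V2} (h : IsCyc E N S c) (hS : S ⊆ S') :
    IsCyc E N S' c := by
  obtain ⟨r, hr, h⟩ := h
  exact ⟨r, hS hr, h⟩

lemma Wk.skel_aux {Q : Finset α} (hE : ∀ p e q, E p e q → q ∈ Q) {p q z L S}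
    (h : Wk E p q z L S) (hp : p ∈ Q) :
    ∃ (r : α) (z0 : V2) (L0 : ℕ) (z1 : V2) (L1 : ℕ) (S1 : Finset α) (cs : List V2),
      Wk E p r z0 L0 S ∧ L0 + Q.card ≤ Q.card * S.card ∧ Wk E r q z1 L1 S1 ∧
      S1.card = L1 + 1 ∧ S1 ⊆ S ∧ (∀ c ∈ cs, IsCyc E Q.card S c) ∧ z = z0 + z1 + cs.sum := by
  induction h with
  | nil =>
    refine ⟨p, 0, 0, 0, 0, {p}, [], .nil p, by simp, .nil p, by simp, by simp, by simp, by simp⟩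
  | @snoc q z L S e q' h he ih =>
    obtain ⟨r, z0, L0, z1, L1, S1, cs, h0, hL0, h1, hc1, hs1, hcs, hz⟩ := ih
    have hSQ : S ⊆ Q := h.sub hE hp
    have hL1 : L1 + 1 ≤ Q.card := by
      rw [← hc1]; exact Finset.card_le_card (hs1.trans hSQ)
    by_cases hq : q' ∈ S
    · have hins : insert q' S = S := Finset.insert_eq_of_mem hq
      rw [hins]
      by_cases hq1 : q' ∈ S1
      · obtain ⟨y1, y2, K1, K2, T1, T2, w1, w2, rfl, rfl, rfl⟩ := h1.split hq1
        refine ⟨r, z0, L0, y1, K1, T1, (y2 + e) :: cs, h0, hL0, w1, ?_, ?_, ?_, ?_⟩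
        · have e1 := w1.card_le
          have e2 := w2.card_le
          have e3 := Finset.card_union_add_card_inter T1 T2
          have e4 : 1 ≤ (T1 ∩ T2).card := by
            apply Finset.card_pos.2
            exact ⟨q', Finset.mem_inter.2 ⟨w1.end_mem, w2.start_mem⟩⟩
          omega
        · exact Finset.subset_union_left.trans hs1
        · intro c hc
          rcases List.mem_cons.1 hc with rfl | hc
          · exact ⟨q', hq, K2 + 1, by omega, _, w2.snoc he⟩
          · exact hcs c hc
        · rw [hz, List.sum_cons]; abel
      · refine ⟨r, z0, L0, z1 + e, L1 + 1, insert q' S1, cs, h0, hL0, h1.snoc he, ?_, ?_, hcs, ?_⟩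
        · rw [Finset.card_insert_of_notMem hq1, hc1]
        · exact Finset.insert_subset hq hs1
        · rw [hz]; abel
    · have hw := (h0.append h1).snoc he
      have hSS : S ∪ S1 = S := Finset.union_eq_left.2 hs1
      rw [hSS] at hw
      refine ⟨q', z0 + z1 + e, L0 + L1 + 1, 0, 0, {q'}, cs, hw, ?_, .nil q', by simp, by simp, ?_, ?_⟩
      · rw [Finset.card_insert_of_notMem hq, Nat.mul_succ]; omega
      · intro c hc; exact (hcs c hc).mono (Finset.subset_insert _ _)
      · rw [hz]; abel

/-- skeleton decomposition -/
lemma Wk.skel {Q : Finset α} (hE : ∀ p e q, E p e q → q ∈ Q) {p q z L S}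
    (h : Wk E p q z L S) (hp : p ∈ Q) :
    ∃ (z0 : V2) (L0 : ℕ) (cs : List V2),
      Wk E p q z0 L0 S ∧ L0 ≤ Q.card * Q.card ∧ (∀ c ∈ cs, IsCyc E Q.card S c) ∧
      z = z0 + cs.sum := by
  obtain ⟨r, z0, L0, z1, L1, S1, cs, h0, hL0, h1, hc1, hs1, hcs, hz⟩ := h.skel_aux hE hp
  have hSQ : S ⊆ Q := h.sub hE hp
  have hL1 : L1 + 1 ≤ Q.card := by
    rw [← hc1]; exact Finset.card_le_card (hs1.trans hSQ)
  have hw := h0.append h1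
  have hSS : S ∪ S1 = S := Finset.union_eq_left.2 hs1
  rw [hSS] at hw
  refine ⟨z0 + z1, L0 + L1, cs, hw, ?_, hcs, hz⟩
  have : Q.card * S.card ≤ Q.card * Q.card := Nat.mul_le_mul_left _ (Finset.card_le_card hSQ)
  omega

/-- insert a cycle -/
lemma Wk.insertCyc {p q z L S N c} (h : Wk E p q z L S) (hc : IsCyc E N S c) :
    ∃ L' ≤ L + N, ∃ S', S ⊆ S' ∧ Wk E p q (z + c) L' S' := by
  obtain ⟨r, hr, ℓ, hℓ, S', w⟩ := hc
  obtain ⟨z1, z2, L1, L2, S1, S2, w1, w2, rfl, rfl, rfl⟩ := h.split hr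
  have := (w1.append w).append w2
  refine ⟨L1 + ℓ + L2, by omega, S1 ∪ S' ∪ S2, ?_, ?_⟩
  · intro x; simp only [Finset.mem_union]; tauto
  · convert this using 1; abel

end walks

end

section
section runs
variable {α : Type} [DecidableEq α]
set_option linter.unusedSectionVars false

/-- one step of a configuration graph inside `A` -/
def St (E : α → V2 → α → Prop) (A : Set (α × V2)) (c c' : α × V2) : Prop :=
  ∃ e, E c.1 e c'.1 ∧ c'.2 = c.2 + e ∧ c ∈ A ∧ c' ∈ A

/-- reachability inside `A` -/
abbrev RT (E : α → V2 → α → Prop) (A : Set (α × V2)) : α × V2 → α × V2 → Prop :=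
  Relation.ReflTransGen (St E A)

variable {E : α → V2 → α → Prop}

lemma St.mono {A B : Set (α × V2)} (h : A ⊆ B) {c c'} (hs : St E A c c') : St E B c c' := by
  obtain ⟨e, h1, h2, h3, h4⟩ := hs
  exact ⟨e, h1, h2, h h3, h h4⟩

lemma RT.mono {A B : Set (α × V2)} (h : A ⊆ B) {c c'} (hs : RT E A c c') : RT E B c c' :=
  Relation.ReflTransGen.mono (r := St E A) (fun _ _ => St.mono h) _ _ hs

/-- vector region as configuration region -/
def reg (α : Type) (A : Set V2) : Set (α × V2) := {c | c.2 ∈ A}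

lemma Wk.run {M : ℕ} (hE : ∀ p e q, E p e q → nb e M) {p q z L S} (h : Wk E p q z L S)
    (u : V2) (A : Set V2) (hA : ∀ x, nb (x - u) (L * M) → x ∈ A) :
    RT E (reg α A) (p, u) (q, u + z) := by
  induction h with
  | nil => simpa using Relation.ReflTransGen.refl
  | @snoc q z L S e r h he ih =>
    have hle : L * M ≤ (L + 1) * M := Nat.mul_le_mul_right _ (by omega)
    refine (ih (fun x hx => hA x (nb_mono hx hle))).tail
      ⟨e, he, by simp [add_assoc], ?_, ?_⟩
    · apply hA
      simpa using nb_mono (h.disp hE) hle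
    · apply hA
      simpa using (h.snoc he).disp hE

lemma Wk.runCyc {M : ℕ} (hE : ∀ p e q, E p e q → nb e M) {r c ℓ S} (h : Wk E r r c ℓ S)
    (u : V2) (m : ℕ) (A : Set V2)
    (hA : ∀ k ≤ m, ∀ x, nb (x - (u + k • c)) (ℓ * M) → x ∈ A) :
    RT E (reg α A) (r, u) (r, u + m • c) := by
  induction m with
  | zero => simpa using Relation.ReflTransGen.refl
  | succ m ih =>
    refine (ih (fun k hk => hA k (by omega))).trans ?_
    have := h.run hE (u + m • c) A (hA m (by omega))
    rwa [add_assoc, ← succ_nsmul] at this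

lemma Wk.runBlock {M : ℕ} (hE : ∀ p e q, E p e q → nb e M) {p q z L S} (h : Wk E p q z L S)
    {N c} (hc : IsCyc E N S c) (u : V2) (m : ℕ) (A : Set V2)
    (hA : ∀ k ≤ m, ∀ x, nb (x - (u + k • c)) ((L + N) * M) → x ∈ A) :
    RT E (reg α A) (p, u) (q, u + z + m • c) := by
  obtain ⟨r, hr, ℓ, hℓ, S', w⟩ := hc
  obtain ⟨z1, z2, L1, L2, S1, S2, w1, w2, rfl, rfl, rfl⟩ := h.split hr
  have d1 := w1.disp hE
  have r1 := w1.run hE u A (fun x hx => hA 0 (by omega) x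
    (by simpa using nb_mono hx (Nat.mul_le_mul_right M (by omega))))
  have r2 := w.runCyc hE (u + z1) m A (fun k hk x hx => hA k hk x (by
    have := nb_add hx d1
    rw [← add_mul] at this
    have := nb_mono this (Nat.mul_le_mul_right M (show ℓ + L1 ≤ L1 + L2 + N by omega))
    convert this using 1; abel))
  have r3 := w2.run hE (u + z1 + m • c) A (fun x hx => hA m le_rfl x (by
    have := nb_add hx d1
    rw [← add_mul] at this
    have := nb_mono this (Nat.mul_le_mul_right M (show L2 + L1 ≤ L1 + L2 + N by omega))
    convert this using 1; abel))
  have := (r1.trans r2).trans r3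
  convert this using 2; abel

/-- rectangle spanned by two points, enlarged by `e` -/
def Rect (w w' : V2) (e : ℕ) : Set V2 :=
  {x | (min w.1 w'.1 - e ≤ x.1 ∧ x.1 ≤ max w.1 w'.1 + e) ∧
    (min w.2 w'.2 - e ≤ x.2 ∧ x.2 ≤ max w.2 w'.2 + e)}

lemma mem_Rect (w w' x : V2) (e : ℕ) : x ∈ Rect w w' e ↔
    (min w.1 w'.1 - e ≤ x.1 ∧ x.1 ≤ max w.1 w'.1 + e) ∧
    (min w.2 w'.2 - e ≤ x.2 ∧ x.2 ≤ max w.2 w'.2 + e) := Iff.rfl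

lemma bres1 (w r j c B : ℤ) (N i m : ℕ) (hN : 0 < N) (hi : i ≤ N) (hr : |r| ≤ B) (hc : |c| ≤ B) :
    min w (w + r + N * j + m * c) - 2 * B ≤ w + r + i * j + (i * m / N : ℕ) * c ∧
    w + r + i * j + (i * m / N : ℕ) * c ≤ max w (w + r + N * j + m * c) + 2 * B := by
  set w' := w + r + N * j + m * c with hw'
  have h1 : N * (i * m / N) + i * m % N = i * m := Nat.div_add_mod _ _
  have h2 : i * m % N < N := Nat.mod_lt _ hN
  set q := i * m / N
  set ρ := i * m % N
  have h1' : (N : ℤ) * q + ρ = i * m := by exact_mod_cast h1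
  have h2' : (ρ : ℤ) < N := by exact_mod_cast h2
  have hρ : (0 : ℤ) ≤ ρ := by positivity
  have hi' : (i : ℤ) ≤ N := by exact_mod_cast hi
  have hi0 : (0 : ℤ) ≤ i := by positivity
  have hN' : (0 : ℤ) < N := by exact_mod_cast hN
  have key : (N : ℤ) * (w + r + i * j + q * c) = (N - i) * (w + r) + i * w' - ρ * c := by
    rw [hw']
    linear_combination c * h1'
  obtain ⟨hr1, hr2⟩ := abs_le.1 hr
  obtain ⟨hc1, hc2⟩ := abs_le.1 hc
  have hB : 0 ≤ B := (abs_nonneg r).trans hr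
  constructor
  · have a1 : min w w' ≤ w := min_le_left _ _
    have a2 : min w w' ≤ w' := min_le_right _ _
    set mn := min w w'
    refine le_of_mul_le_mul_left ?_ hN'
    rw [key]
    nlinarith [mul_nonneg (sub_nonneg.2 hi') (show 0 ≤ w + r - (mn - B) by linarith),
      mul_nonneg hi0 (sub_nonneg.2 a2), mul_nonneg hρ (sub_nonneg.2 hc2),
      mul_nonneg (sub_nonneg.2 h2'.le) hB, mul_nonneg hi0 hB]
  · have a1 : w ≤ max w w' := le_max_left _ _
    have a2 : w' ≤ max w w' := le_max_right _ _
    set mx := max w w'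
    refine le_of_mul_le_mul_left ?_ hN'
    rw [key]
    nlinarith [mul_nonneg (sub_nonneg.2 hi') (show 0 ≤ (mx + B) - (w + r) by linarith),
      mul_nonneg hi0 (sub_nonneg.2 a2), mul_nonneg hρ (show 0 ≤ c + B by linarith),
      mul_nonneg (sub_nonneg.2 h2'.le) hB, mul_nonneg hi0 hB]

lemma bres2 (w r j c B : ℤ) (N i m k : ℕ) (hi : i < N) (hr : |r| ≤ B) (hc : |c| ≤ B)
    (hj : |j| ≤ B) (hk : i * m / N + k ≤ (i + 1) * m / N) :
    min w (w + r + N * j + m * c) - 3 * B ≤ w + r + i * j + (i * m / N : ℕ) * c + k * c ∧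
    w + r + i * j + (i * m / N : ℕ) * c + k * c ≤ max w (w + r + N * j + m * c) + 3 * B := by
  have hN : 0 < N := by omega
  obtain ⟨b1, b2⟩ := bres1 w r j c B N i m hN hi.le hr hc
  obtain ⟨b3, b4⟩ := bres1 w r j c B N (i + 1) m hN hi hr hc
  have hB : 0 ≤ B := (abs_nonneg r).trans hr
  obtain ⟨hj1, hj2⟩ := abs_le.1 hj
  set mn := min w (w + r + N * j + m * c)
  set mx := max w (w + r + N * j + m * c)
  set q := i * m / N
  set q' := (i + 1) * m / N
  have hk' : (q : ℤ) + k ≤ q' := by exact_mod_cast hk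
  have hk0 : (0 : ℤ) ≤ k := by positivity
  push_cast at b3 b4
  rcases le_total 0 c with h | h
  · have e1 : 0 ≤ (k : ℤ) * c := mul_nonneg hk0 h
    have e2 : 0 ≤ ((q' : ℤ) - q - k) * c := mul_nonneg (by linarith) h
    constructor <;> nlinarith
  · have e1 : 0 ≤ (k : ℤ) * (-c) := mul_nonneg hk0 (by linarith)
    have e2 : 0 ≤ ((q' : ℤ) - q - k) * (-c) := mul_nonneg (by linarith) (by linarith)
    constructor <;> nlinarith

lemma straight {M : ℕ} (hE : ∀ p e q, E p e q → nb e M) {p r Lr Sr j Lj S N c Λ}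
    (hr : Wk E p p r Lr Sr) (hj : Wk E p p j Lj S) (hc : IsCyc E N S c)
    (h1 : Lr ≤ Λ) (h2 : Lj ≤ Λ) (h3 : N ≤ Λ) (w : V2) (K m : ℕ) :
    RT E (reg α (Rect w (w + r + (K + 1) • j + m • c) (5 * (Λ * M))))
      (p, w) (p, w + r + (K + 1) • j + m • c) := by
  have dr : nb r (Λ * M) := nb_mono (hr.disp hE) (Nat.mul_le_mul_right M h1)
  have dj : nb j (Λ * M) := nb_mono (hj.disp hE) (Nat.mul_le_mul_right M h2)
  have dc : nb c (Λ * M) := by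
    obtain ⟨_, _, ℓ, hℓ, _, hw⟩ := hc
    exact nb_mono (hw.disp hE) (Nat.mul_le_mul_right M (hℓ.trans h3))
  set A := Rect w (w + r + (K + 1) • j + m • c) (5 * (Λ * M)) with hA
  have r0 : RT E (reg α A) (p, w) (p, w + r) := by
    apply hr.run hE w A
    intro x hx
    have hx := nb_mono hx (Nat.mul_le_mul_right M h1)
    obtain ⟨x1, x2⟩ := hx
    have x1 := abs_le.1 x1
    have x2 := abs_le.1 x2
    simp only [Prod.fst_sub, Prod.snd_sub] at x1 x2
    have : (0 : ℤ) ≤ (Λ * M : ℕ) := by positivity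
    rw [hA, mem_Rect]
    push_cast at *
    refine ⟨⟨?_, ?_⟩, ?_, ?_⟩
    · linarith [min_le_left w.1 (w + r + (K + 1) • j + m • c).1]
    · linarith [le_max_left w.1 (w + r + (K + 1) • j + m • c).1]
    · linarith [min_le_left w.2 (w + r + (K + 1) • j + m • c).2]
    · linarith [le_max_left w.2 (w + r + (K + 1) • j + m • c).2]
  have ind : ∀ i ≤ K + 1, RT E (reg α A) (p, w) (p, w + r + i • j + (i * m / (K + 1)) • c) := by
    intro i
    induction i with
    | zero => intro _; simpa using r0
    | succ i ih =>
      intro hi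
      refine (ih (by omega)).trans ?_
      have hmono : i * m / (K + 1) ≤ (i + 1) * m / (K + 1) :=
        Nat.div_le_div_right (Nat.mul_le_mul_right _ (by omega))
      have := hj.runBlock hE hc (w + r + i • j + (i * m / (K + 1)) • c)
        ((i + 1) * m / (K + 1) - i * m / (K + 1)) A ?_
      · convert this using 2
        have e : ((i + 1) * m / (K + 1)) • c = (i * m / (K + 1)) • c +
          ((i + 1) * m / (K + 1) - i * m / (K + 1)) • c := by
          rw [← add_nsmul]; congr 1; omega
        rw [e, succ_nsmul]; abel
      · intro k hk x hx
        have hx := nb_mono hx (show (Lj + N) * M ≤ 2 * (Λ * M) by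
          have := Nat.mul_le_mul_right M (show Lj + N ≤ 2 * Λ by omega)
          linarith [this])
        obtain ⟨x1, x2⟩ := hx
        have x1 := abs_le.1 x1
        have x2 := abs_le.1 x2
        have b1 := bres2 w.1 r.1 j.1 c.1 (Λ * M : ℕ) (K + 1) i m k (by omega) dr.1 dc.1 dj.1
          (by omega)
        have b2 := bres2 w.2 r.2 j.2 c.2 (Λ * M : ℕ) (K + 1) i m k (by omega) dr.2 dc.2 dj.2
          (by omega)
        rw [hA, mem_Rect]
        clear hA ih
        generalize i * m / (K + 1) = qq at *
        simp only [Prod.fst_sub, Prod.snd_sub, Prod.fst_add, Prod.snd_add, Prod.smul_fst,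
          Prod.smul_snd] at x1 x2 ⊢
        simp only [nsmul_eq_mul] at x1 x2 ⊢
        push_cast at x1 x2 b1 b2 ⊢
        refine ⟨⟨?_, ?_⟩, ?_, ?_⟩ <;> linarith
  have := ind (K + 1) le_rfl
  rwa [Nat.mul_div_cancel_left m (by omega : 0 < K + 1)] at this

end runs

end

section
lemma shift3 (n1 n2 n3 : ℕ) (t1 t2 t3 : ℤ) (h : 0 < t1 ∨ 0 < t2 ∨ 0 < t3) :
    ∃ k m1 m2 m3 : ℕ, (m1 : ℤ) = n1 - k * t1 ∧ (m2 : ℤ) = n2 - k * t2 ∧ (m3 : ℤ) = n3 - k * t3 ∧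
      ((m1 : ℤ) < t1 ∨ (m2 : ℤ) < t2 ∨ (m3 : ℤ) < t3) := by
  classical
  let P : ℕ → Prop := fun k => 0 ≤ n1 - (k : ℤ) * t1 ∧ 0 ≤ n2 - (k : ℤ) * t2 ∧ 0 ≤ n3 - (k : ℤ) * t3
  have h0 : P 0 := by simp [P]
  let b := n1 + n2 + n3
  have hk : P (Nat.findGreatest P b) := Nat.findGreatest_spec (Nat.zero_le _) h0
  set k := Nat.findGreatest P b with hkdef
  have hnk : ¬ P (k + 1) := by
    intro hP
    have hle : k + 1 ≤ b := by
      obtain ⟨a1, a2, a3⟩ := hP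
      push_cast at a1 a2 a3
      zify
      simp only [b]; push_cast
      rcases h with h | h | h
      · nlinarith
      · nlinarith
      · nlinarith
    have := Nat.le_findGreatest hle hP
    omega
  obtain ⟨a1, a2, a3⟩ := hk
  refine ⟨k, (n1 - (k : ℤ) * t1).toNat, (n2 - (k : ℤ) * t2).toNat, (n3 - (k : ℤ) * t3).toNat,
    Int.toNat_of_nonneg a1, Int.toNat_of_nonneg a2, Int.toNat_of_nonneg a3, ?_⟩
  rw [Int.toNat_of_nonneg a1, Int.toNat_of_nonneg a2, Int.toNat_of_nonneg a3]
  by_contra hc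
  push Not at hc
  apply hnk
  simp only [P]; push_cast
  refine ⟨?_, ?_, ?_⟩ <;> linarith [hc.1, hc.2.1, hc.2.2]

lemma rel2 {x y : V2} {a : ℕ} (ha : 1 ≤ a) (hx : nb x a) (hy : nb y a)
    (hd : x.1 * y.2 = x.2 * y.1) :
    ∃ s t : ℤ, (s ≠ 0 ∨ t ≠ 0) ∧ |s| ≤ a ∧ |t| ≤ a ∧ s • x + t • y = 0 := by
  have ha' : (1 : ℤ) ≤ a := by exact_mod_cast ha
  by_cases h1 : x.1 = 0
  · by_cases h2 : x.2 = 0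
    · refine ⟨1, 0, by simp, by simpa using ha', by simp, ?_⟩
      ext <;> simp [h1, h2]
    · refine ⟨y.2, -x.2, Or.inr (by simpa using h2), hy.2, by simpa using hx.2, ?_⟩
      ext <;> simp <;> linarith
  · refine ⟨y.1, -x.1, Or.inr (by simpa using h1), hy.1, by simpa using hx.1, ?_⟩
    ext <;> simp <;> linarith

lemma det_bd {a : ℕ} {p q r s : ℤ} (hp : |p| ≤ a) (hq : |q| ≤ a) (hr : |r| ≤ a) (hs : |s| ≤ a) :
    |p * q - r * s| ≤ 2 * a ^ 2 := by
  have h1 : |p * q| ≤ a * a := by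
    rw [abs_mul]; exact mul_le_mul hp hq (abs_nonneg _) (by positivity)
  have h2 : |r * s| ≤ a * a := by
    rw [abs_mul]; exact mul_le_mul hr hs (abs_nonneg _) (by positivity)
  calc |p * q - r * s| ≤ |p * q| + |r * s| := abs_sub _ _
    _ ≤ _ := by linarith

lemma rel3 {x y z : V2} {a : ℕ} (ha : 1 ≤ a) (hx : nb x a) (hy : nb y a) (hz : nb z a) :
    ∃ s t r : ℤ, (s ≠ 0 ∨ t ≠ 0 ∨ r ≠ 0) ∧ |s| ≤ 2 * a ^ 2 ∧ |t| ≤ 2 * a ^ 2 ∧ |r| ≤ 2 * a ^ 2 ∧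
      s • x + t • y + r • z = 0 := by
  have ha' : (1 : ℤ) ≤ a := by exact_mod_cast ha
  have hle : (a : ℤ) ≤ 2 * a ^ 2 := by nlinarith
  by_cases h : x.1 * y.2 - x.2 * y.1 = 0
  · obtain ⟨s, t, h0, h1, h2, h3⟩ := rel2 ha hx hy (by linarith)
    exact ⟨s, t, 0, by tauto, h1.trans hle, h2.trans hle, by simp, by simpa using h3⟩
  · refine ⟨y.1 * z.2 - y.2 * z.1, z.1 * x.2 - z.2 * x.1, x.1 * y.2 - x.2 * y.1,
      Or.inr (Or.inr h), det_bd hy.1 hz.2 hy.2 hz.1, det_bd hz.1 hx.2 hz.2 hx.1,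
      det_bd hx.1 hy.2 hx.2 hy.1, ?_⟩
    ext <;> simp <;> ring

lemma smul_nat_eq (n : ℕ) (c : V2) : n • c = (n : ℤ) • c := (natCast_zsmul c n).symm

lemma reduce1 {x y z : V2} {a : ℕ} (ha : 1 ≤ a) (hx : nb x a) (hy : nb y a) (hz : nb z a)
    (n1 n2 n3 : ℕ) : ∃ m1 m2 m3 : ℕ, n1 • x + n2 • y + n3 • z = m1 • x + m2 • y + m3 • z ∧
      (m1 ≤ 2 * a ^ 2 ∨ m2 ≤ 2 * a ^ 2 ∨ m3 ≤ 2 * a ^ 2) := by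
  have key : ∃ s t r : ℤ, (0 < s ∨ 0 < t ∨ 0 < r) ∧ |s| ≤ 2 * a ^ 2 ∧ |t| ≤ 2 * a ^ 2 ∧
      |r| ≤ 2 * a ^ 2 ∧ s • x + t • y + r • z = 0 := by
    obtain ⟨s, t, r, h0, h1, h2, h3, h4⟩ := rel3 ha hx hy hz
    by_cases hp : 0 < s ∨ 0 < t ∨ 0 < r
    · exact ⟨s, t, r, hp, h1, h2, h3, h4⟩
    · refine ⟨-s, -t, -r, by omega, by simpa, by simpa, by simpa, ?_⟩
      rw [neg_smul, neg_smul, neg_smul, ← neg_add, ← neg_add, h4, neg_zero]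
  obtain ⟨s, t, r, h0, h1, h2, h3, h4⟩ := key
  obtain ⟨k, m1, m2, m3, e1, e2, e3, hm⟩ := shift3 n1 n2 n3 s t r h0
  refine ⟨m1, m2, m3, ?_, ?_⟩
  · simp only [smul_nat_eq, e1, e2, e3]
    have : (k : ℤ) • (s • x + t • y + r • z) = 0 := by rw [h4, smul_zero]
    linear_combination this
  · rw [abs_le] at h1 h2 h3
    zify
    rcases hm with h | h | h
    · left; linarith
    · right; left; linarith
    · right; right; linarith

lemma reduceS {a : ℕ} (ha : 1 ≤ a) (S : Finset V2) (hS : ∀ c ∈ S, nb c a) (f : V2 → ℕ) :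
    ∃ (l : List V2) (n1 n2 : ℕ) (c1 c2 : V2), l.length ≤ S.card * (2 * a ^ 2) ∧ (∀ c ∈ l, c ∈ S) ∧
      (c1 ∈ S ∨ c1 = 0) ∧ (c2 ∈ S ∨ c2 = 0) ∧ ∑ c ∈ S, f c • c = l.sum + n1 • c1 + n2 • c2 := by
  induction S using Finset.induction_on with
  | empty => exact ⟨[], 0, 0, 0, 0, by simp, by simp, by simp, by simp, by simp⟩
  | insert x S hx ih =>
    obtain ⟨l, n1, n2, c1, c2, hl, hl', h1, h2, he⟩ :=
      ih (fun c hc => hS c (Finset.mem_insert_of_mem hc))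
    have nb1 : nb c1 a := by
      rcases h1 with h | rfl
      · exact hS _ (Finset.mem_insert_of_mem h)
      · exact nb_zero _
    have nb2 : nb c2 a := by
      rcases h2 with h | rfl
      · exact hS _ (Finset.mem_insert_of_mem h)
      · exact nb_zero _
    have nbx := hS x (Finset.mem_insert_self _ _)
    have h1' : c1 ∈ insert x S ∨ c1 = 0 := h1.imp_left Finset.mem_insert_of_mem
    have h2' : c2 ∈ insert x S ∨ c2 = 0 := h2.imp_left Finset.mem_insert_of_mem
    obtain ⟨m1, m2, m3, e, hm⟩ := reduce1 ha nb1 nb2 nbx n1 n2 (f x)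
    rw [Finset.sum_insert hx, Finset.card_insert_of_notMem hx]
    -- generic finishing step
    have fin : ∀ (m n n' : ℕ) (d d1 d2 : V2), m ≤ 2 * a ^ 2 → (d ∈ insert x S ∨ d = 0) →
        (d1 ∈ insert x S ∨ d1 = 0) → (d2 ∈ insert x S ∨ d2 = 0) →
        m1 • c1 + m2 • c2 + m3 • x = m • d + n • d1 + n' • d2 →
        ∃ (l : List V2) (n1 n2 : ℕ) (c1 c2 : V2), l.length ≤ (S.card + 1) * (2 * a ^ 2) ∧
        (∀ c ∈ l, c ∈ insert x S) ∧ (c1 ∈ insert x S ∨ c1 = 0) ∧ (c2 ∈ insert x S ∨ c2 = 0) ∧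
        f x • x + ∑ c ∈ S, f c • c = l.sum + n1 • c1 + n2 • c2 := by
      intro m n n' d d1 d2 hm hd hd1 hd2 hee
      have tot : f x • x + ∑ c ∈ S, f c • c = l.sum + (m • d + n • d1 + n' • d2) := by
        rw [he, ← hee, ← e]; abel
      rcases hd with hd | rfl
      · refine ⟨l ++ List.replicate m d, n, n', d1, d2, ?_, ?_, hd1, hd2, ?_⟩
        · simp; linarith
        · intro c hc
          rcases List.mem_append.1 hc with h | h
          · exact Finset.mem_insert_of_mem (hl' c h)
          · rw [List.eq_of_mem_replicate h]; exact hd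
        · rw [tot]; simp; abel
      · refine ⟨l, n, n', d1, d2, ?_, ?_, hd1, hd2, ?_⟩
        · linarith
        · exact fun c hc => Finset.mem_insert_of_mem (hl' c hc)
        · rw [tot]; simp; abel
    have hxx : x ∈ insert x S ∨ x = 0 := Or.inl (Finset.mem_insert_self _ _)
    rcases hm with h | h | h
    · exact fin m1 m2 m3 c1 c2 x h h1' h2' hxx (by abel)
    · exact fin m2 m1 m3 c2 c1 x h h2' h1' hxx (by abel)
    · exact fin m3 m1 m2 x c1 c2 h hxx h1' h2' (by abel)

lemma card_nb {a : ℕ} (ha : 1 ≤ a) (S : Finset V2) (hS : ∀ c ∈ S, nb c a) :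
    S.card ≤ 9 * a ^ 2 := by
  have hsub : S ⊆ Finset.Icc (-(a : ℤ)) a ×ˢ Finset.Icc (-(a : ℤ)) a := by
    intro c hc
    obtain ⟨h1, h2⟩ := hS c hc
    rw [abs_le] at h1 h2
    simp only [Finset.mem_product, Finset.mem_Icc]
    exact ⟨h1, h2⟩
  have := Finset.card_le_card hsub
  rw [Finset.card_product, Int.card_Icc] at this
  have e : ((a : ℤ) + 1 - -(a : ℤ)).toNat = 2 * a + 1 := by omega
  rw [e] at this
  nlinarith

lemma reduceL {a : ℕ} (ha : 1 ≤ a) (cs : List V2) (hS : ∀ c ∈ cs, nb c a) :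
    ∃ (l : List V2) (n1 n2 : ℕ) (c1 c2 : V2), l.length ≤ 18 * a ^ 4 ∧ (∀ c ∈ l, c ∈ cs) ∧
      (c1 ∈ cs ∨ c1 = 0) ∧ (c2 ∈ cs ∨ c2 = 0) ∧ cs.sum = l.sum + n1 • c1 + n2 • c2 := by
  obtain ⟨l, n1, n2, c1, c2, hl, hl', h1, h2, he⟩ :=
    reduceS ha cs.toFinset (by simpa using hS) (fun c => @List.count V2 instBEqOfDecidableEq c cs)
  refine ⟨l, n1, n2, c1, c2, hl.trans ?_, by simpa using hl', by simpa using h1,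
    by simpa using h2, ?_⟩
  · have := card_nb ha cs.toFinset (by simpa using hS)
    calc _ ≤ 9 * a ^ 2 * (2 * a ^ 2) := Nat.mul_le_mul_right _ this
      _ = _ := by ring
  · rw [← he]; exact Finset.sum_list_count cs

section nf
variable {α : Type} [DecidableEq α] {E : α → V2 → α → Prop}
set_option linter.unusedSectionVars false

lemma Wk.insertList {N : ℕ} (l : List V2) : ∀ {p q z L S}, Wk E p q z L S →
    (∀ c ∈ l, IsCyc E N S c) →
    ∃ L' ≤ L + l.length * N, ∃ S', S ⊆ S' ∧ Wk E p q (z + l.sum) L' S' := by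
  induction l with
  | nil => intro p q z L S h _; exact ⟨L, by simp, S, subset_rfl, by simpa using h⟩
  | cons c l ih =>
    intro p q z L S h hc
    obtain ⟨L1, h1, S1, hS1, w1⟩ := h.insertCyc (hc c (by simp))
    obtain ⟨L2, h2, S2, hS2, w2⟩ := ih w1 (fun d hd => (hc d (by simp [hd])).mono hS1)
    refine ⟨L2, ?_, S2, hS1.trans hS2, ?_⟩
    · simp only [List.length_cons]; linarith
    · rwa [List.sum_cons, ← add_assoc]

lemma Wk.insertMul {N : ℕ} {p q z L S c} (h : Wk E p q z L S) (hc : IsCyc E N S c) (k : ℕ) :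
    ∃ L' ≤ L + k * N, ∃ S', S ⊆ S' ∧ Wk E p q (z + k • c) L' S' := by
  obtain ⟨L', h1, S', h2, h3⟩ := h.insertList (N := N) (List.replicate k c)
    (fun d hd => by rw [List.eq_of_mem_replicate hd]; exact hc)
  exact ⟨L', by simpa using h1, S', h2, by simpa using h3⟩

lemma Wk.iter {p z L S} (h : Wk E p p z L S) (k : ℕ) :
    Wk E p p ((k + 1) • z) ((k + 1) * L) S := by
  induction k with
  | zero => simpa using h
  | succ k ih =>
    have := ih.append h
    rw [Finset.union_self] at this
    rwa [succ_nsmul, Nat.succ_mul]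

lemma isCyc_zero {N : ℕ} {S : Finset α} {p : α} (hp : p ∈ S) : IsCyc E N S 0 :=
  ⟨p, hp, 0, Nat.zero_le _, _, Wk.nil p⟩

lemma IsCyc.disp {M N : ℕ} (hE : ∀ p e q, E p e q → nb e M) {S : Finset α} {c : V2}
    (h : IsCyc E N S c) : nb c (N * M) := by
  obtain ⟨_, _, ℓ, hℓ, _, hw⟩ := h
  exact nb_mono (hw.disp hE) (Nat.mul_le_mul_right M hℓ)

/-- first normal form -/
lemma Wk.nf0 {M : ℕ} {Q : Finset α} (hQ : ∀ p e q, E p e q → q ∈ Q)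
    (hE : ∀ p e q, E p e q → nb e M) (hM : 1 ≤ M) {p q z L S}
    (h : Wk E p q z L S) (hp : p ∈ Q) :
    ∃ (j : V2) (Lj : ℕ) (r : V2) (Lr : ℕ) (Sr : Finset α) (n1 n2 : ℕ) (c1 c2 : V2),
      Wk E p q j Lj S ∧ Lj ≤ Q.card ^ 2 ∧ Wk E p q r Lr Sr ∧ S ⊆ Sr ∧
      Lr ≤ Q.card ^ 2 + 18 * (Q.card * M) ^ 4 * Q.card ∧ IsCyc E Q.card S c1 ∧ IsCyc E Q.card S c2 ∧
      z = r + n1 • c1 + n2 • c2 := by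
  obtain ⟨j, Lj, cs, hj, hLj, hcs, hz⟩ := h.skel hQ hp
  have hN : 1 ≤ Q.card := Finset.card_pos.2 ⟨p, hp⟩
  obtain ⟨l, n1, n2, c1, c2, hl, hl', h1, h2, he⟩ :=
    reduceL (a := Q.card * M) (Nat.mul_pos hN hM) cs (fun c hc => (hcs c hc).disp hE)
  have hc1 : IsCyc E Q.card S c1 := by
    rcases h1 with h1 | rfl
    · exact hcs _ h1
    · exact isCyc_zero h.start_mem
  have hc2 : IsCyc E Q.card S c2 := by
    rcases h2 with h1 | rfl
    · exact hcs _ h1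
    · exact isCyc_zero h.start_mem
  obtain ⟨Lr, hLr, Sr, hSr, hr⟩ := hj.insertList l (fun c hc => hcs c (hl' c hc))
  refine ⟨j, Lj, j + l.sum, Lr, Sr, n1, n2, c1, c2, hj, by rw [pow_two]; exact hLj, hr, hSr, ?_, hc1, hc2, ?_⟩
  · have := Nat.mul_le_mul_right Q.card hl
    rw [pow_two]; linarith
  · rw [hz, he]; abel

/-- length bound -/
def Lam (N M : ℕ) : ℕ := 32 * N ^ 6 * M ^ 4

lemma lam_bd {N M : ℕ} (hN : 1 ≤ N) (hM : 1 ≤ M) :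
    N ≤ N ^ 6 * M ^ 4 ∧ N ^ 2 ≤ N ^ 6 * M ^ 4 ∧ (N * M) ^ 4 * N ≤ N ^ 6 * M ^ 4 ∧
    (N ^ 2 * M) ^ 2 * N ≤ N ^ 6 * M ^ 4 ∧ (N ^ 2 * M) ^ 2 * N ^ 2 ≤ N ^ 6 * M ^ 4 := by
  have hp : ∀ i ≤ 6, ∀ k ≤ 4, N ^ i * M ^ k ≤ N ^ 6 * M ^ 4 := fun i hi k hk =>
    Nat.mul_le_mul (Nat.pow_le_pow_right hN hi) (Nat.pow_le_pow_right hM hk)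
  refine ⟨?_, ?_, ?_, ?_, ?_⟩
  · simpa using hp 1 (by norm_num) 0 (by norm_num)
  · simpa using hp 2 (by norm_num) 0 (by norm_num)
  · have := hp 5 (by norm_num) 4 (by norm_num); linarith [show (N * M) ^ 4 * N = N ^ 5 * M ^ 4 by ring]
  · have := hp 5 (by norm_num) 2 (by norm_num); linarith [show (N ^ 2 * M) ^ 2 * N = N ^ 5 * M ^ 2 by ring]
  · have := hp 6 (by norm_num) 2 (by norm_num); linarith [show (N ^ 2 * M) ^ 2 * N ^ 2 = N ^ 6 * M ^ 2 by ring]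

/-- normal form for parallel cycles -/
lemma Wk.nfV {M : ℕ} {Q : Finset α} (hQ : ∀ p e q, E p e q → q ∈ Q)
    (hE : ∀ p e q, E p e q → nb e M) (hM : 1 ≤ M)
    (hpar : ∀ S c, IsCyc E Q.card S c → c.1 = 0) {p q z L S}
    (h : Wk E p q z L S) (hp : p ∈ Q) :
    ∃ (j : V2) (Lj : ℕ) (Sj : Finset α) (m : ℕ) (c : V2),
      Wk E p q j Lj Sj ∧ Lj ≤ Lam Q.card M ∧ IsCyc E Q.card Sj c ∧ z = j + m • c := by
  obtain ⟨j, Lj, r, Lr, Sr, n1, n2, c1, c2, hj, hLj, hr, hS, hLr, hc1, hc2, hz⟩ := h.nf0 hQ hE hM hp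
  have hN : 1 ≤ Q.card := Finset.card_pos.2 ⟨p, hp⟩
  obtain ⟨b1, b2, b3, b4, b5⟩ := lam_bd hN hM
  have hb1 := nb_mono (hc1.disp hE) (show Q.card * M ≤ Q.card ^ 2 * M from
    Nat.mul_le_mul_right _ (by nlinarith))
  have hb2 := nb_mono (hc2.disp hE) (show Q.card * M ≤ Q.card ^ 2 * M from
    Nat.mul_le_mul_right _ (by nlinarith))
  have hb0 : 1 ≤ Q.card ^ 2 * M := Nat.mul_pos (by positivity) hM
  have key : ∃ m1 m2 : ℕ, n1 • c1 + n2 • c2 = m1 • c1 + m2 • c2 ∧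
      (m1 ≤ 2 * (Q.card ^ 2 * M) ^ 2 ∨ m2 ≤ 2 * (Q.card ^ 2 * M) ^ 2) := by
    have hle : ((Q.card ^ 2 * M : ℕ) : ℤ) ≤ ((2 * (Q.card ^ 2 * M) ^ 2 : ℕ) : ℤ) := by
      norm_cast; nlinarith
    have key : ∃ s t : ℤ, (0 < s ∨ 0 < t) ∧ |s| ≤ (2 * (Q.card ^ 2 * M) ^ 2 : ℕ) ∧
        |t| ≤ (2 * (Q.card ^ 2 * M) ^ 2 : ℕ) ∧ s • c1 + t • c2 = 0 := by
      obtain ⟨s, t, h0, h1, h2, h4⟩ := rel2 hb0 hb1 hb2 (by rw [hpar _ _ hc1, hpar _ _ hc2]; ring)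
      by_cases hp : 0 < s ∨ 0 < t
      · exact ⟨s, t, hp, h1.trans hle, h2.trans hle, h4⟩
      · refine ⟨-s, -t, by omega, by simpa using h1.trans hle, by simpa using h2.trans hle, ?_⟩
        rw [neg_smul, neg_smul, ← neg_add, h4, neg_zero]
    obtain ⟨s, t, h0, h1, h2, h4⟩ := key
    obtain ⟨k, m1, m2, m3, e1, e2, e3, hm⟩ := shift3 n1 n2 0 s t 0 (by tauto)
    refine ⟨m1, m2, ?_, ?_⟩
    · simp only [smul_nat_eq, e1, e2]
      have : (k : ℤ) • (s • c1 + t • c2) = 0 := by rw [h4, smul_zero]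
      linear_combination this
    · rw [abs_le] at h1 h2
      zify at *
      rcases hm with h | h | h
      · left; linarith
      · right; linarith
      · omega
  obtain ⟨m1, m2, he, hm⟩ := key
  have fin : ∀ (m m' : ℕ) (c c' : V2), IsCyc E Q.card S c → IsCyc E Q.card S c' →
      m ≤ 2 * (Q.card ^ 2 * M) ^ 2 → z = r + m • c + m' • c' → ∃ (j : V2) (Lj : ℕ) (Sj : Finset α) (m : ℕ) (c : V2),
      Wk E p q j Lj Sj ∧ Lj ≤ Lam Q.card M ∧ IsCyc E Q.card Sj c ∧ z = j + m • c := by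
    intro m m' c c' hc hc' hm hz
    obtain ⟨L', hL', S', hS', w⟩ := hr.insertMul (hc.mono hS) m
    refine ⟨_, L', S', m', c', w, ?_, hc'.mono (hS.trans hS'), hz⟩
    have := Nat.mul_le_mul_right Q.card hm
    unfold Lam
    nlinarith
  rw [add_assoc, he] at hz
  rcases hm with hm | hm
  · exact fin m1 m2 c1 c2 hc1 hc2 hm (by rw [hz]; abel)
  · exact fin m2 m1 c2 c1 hc2 hc1 hm (by rw [hz]; abel)

set_option maxHeartbeats 1000000 in
/-- normal form for closed walks -/
lemma Wk.nfI {M : ℕ} {Q : Finset α} (hQ : ∀ p e q, E p e q → q ∈ Q)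
    (hE : ∀ p e q, E p e q → nb e M) (hM : 1 ≤ M) {p z L S}
    (h : Wk E p p z L S) (hp : p ∈ Q) :
    ∃ (r : V2) (Lr : ℕ) (Sr : Finset α) (j : V2) (Lj : ℕ) (Sj : Finset α) (K m : ℕ) (c : V2),
      Wk E p p r Lr Sr ∧ Wk E p p j Lj Sj ∧ Lr ≤ Lam Q.card M ∧ Lj ≤ Lam Q.card M ∧
      IsCyc E Q.card Sj c ∧ z = r + (K + 1) • j + m • c := by
  obtain ⟨j, Lj, r, Lr, Sr, n1, n2, c1, c2, hj, hLj, hr, hS, hLr, hc1, hc2, hz⟩ := h.nf0 hQ hE hM hp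
  have hN : 1 ≤ Q.card := Finset.card_pos.2 ⟨p, hp⟩
  obtain ⟨b1, b2, b3, b4, b5⟩ := lam_bd hN hM
  have hb1 := nb_mono (hc1.disp hE) (show Q.card * M ≤ Q.card ^ 2 * M from
    Nat.mul_le_mul_right _ (by nlinarith))
  have hb2 := nb_mono (hc2.disp hE) (show Q.card * M ≤ Q.card ^ 2 * M from
    Nat.mul_le_mul_right _ (by nlinarith))
  have hbj := nb_mono (hj.disp hE) (show Lj * M ≤ Q.card ^ 2 * M from Nat.mul_le_mul_right _ hLj)
  have hb0 : 1 ≤ Q.card ^ 2 * M := Nat.mul_pos (by positivity) hM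
  -- finishing: one bounded, extra `k` copies of `j`
  have fin : ∀ (k m m' : ℕ) (c c' : V2), IsCyc E Q.card S c → IsCyc E Q.card S c' →
      m ≤ 2 * (Q.card ^ 2 * M) ^ 2 → z = r + k • j + m • c + m' • c' →
      ∃ (r : V2) (Lr : ℕ) (Sr : Finset α) (j : V2) (Lj : ℕ) (Sj : Finset α) (K m : ℕ) (c : V2),
      Wk E p p r Lr Sr ∧ Wk E p p j Lj Sj ∧ Lr ≤ Lam Q.card M ∧ Lj ≤ Lam Q.card M ∧
      IsCyc E Q.card Sj c ∧ z = r + (K + 1) • j + m • c := by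
    intro k m m' c c' hc hc' hm hz
    obtain ⟨L', hL', S', hS', w⟩ := hr.insertMul (hc.mono hS) m
    have hL'' : L' ≤ Lam Q.card M := by
      have := Nat.mul_le_mul_right Q.card hm
      unfold Lam
      nlinarith
    cases k with
    | zero =>
      refine ⟨0, 0, _, _, L', S', 0, m', c', Wk.nil p, w, by simp, hL'', hc'.mono (hS.trans hS'), ?_⟩
      rw [hz]; simp
    | succ k =>
      refine ⟨_, L', S', j, Lj, S, k, m', c', w, hj, hL'', ?_, hc', ?_⟩
      · unfold Lam; nlinarith
      · rw [hz]; abel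
  have key : ∃ s t1 t2 : ℤ, (0 < s ∨ (s = 0 ∧ (0 < t1 ∨ 0 < t2))) ∧ |s| ≤ (2 * (Q.card ^ 2 * M) ^ 2 : ℕ) ∧
      |t1| ≤ (2 * (Q.card ^ 2 * M) ^ 2 : ℕ) ∧ |t2| ≤ (2 * (Q.card ^ 2 * M) ^ 2 : ℕ) ∧
      s • j + t1 • c1 + t2 • c2 = 0 := by
    obtain ⟨s, t, t', h0, h1, h2, h3, h4⟩ := rel3 hb0 hbj hb1 hb2
    have hc : (2 * (Q.card ^ 2 * M : ℕ) ^ 2 : ℤ) = (2 * (Q.card ^ 2 * M) ^ 2 : ℕ) := by push_cast; ring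
    rw [hc] at h1 h2 h3
    by_cases hp : (0 < s ∨ (s = 0 ∧ (0 < t ∨ 0 < t')))
    · exact ⟨s, t, t', hp, h1, h2, h3, h4⟩
    · refine ⟨-s, -t, -t', by omega, by simpa using h1, by simpa using h2, by simpa using h3, ?_⟩
      rw [neg_smul, neg_smul, neg_smul, ← neg_add, ← neg_add, h4, neg_zero]
  obtain ⟨s, t1, t2, h0, h1, h2, h3, h4⟩ := key
  set B := 2 * (Q.card ^ 2 * M) ^ 2 with hB
  rw [abs_le] at h1 h2 h3
  by_cases hcase : 0 < s ∧ 0 ≤ t1 ∧ 0 ≤ t2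
  · obtain ⟨hs, ht1, ht2⟩ := hcase
    obtain ⟨s', rfl⟩ : ∃ s' : ℕ, s = s' + 1 := ⟨(s - 1).toNat, by omega⟩
    obtain ⟨t1, rfl⟩ := Int.eq_ofNat_of_zero_le ht1
    obtain ⟨t2, rfl⟩ := Int.eq_ofNat_of_zero_le ht2
    cases n1 with
    | zero => exact fin 0 0 n2 c1 c2 hc1 hc2 (by positivity) (by rw [hz]; simp)
    | succ n =>
      obtain ⟨L1, hL1, S1, hS1, w1⟩ := (hj.iter s').insertMul hc1 (t1 + 1)
      obtain ⟨L2, hL2, S2, hS2, w2⟩ := w1.insertMul (hc2.mono hS1) t2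
      refine ⟨r, Lr, Sr, _, L2, S2, n, n2, c2, hr, w2, ?_, ?_, hc2.mono (hS1.trans hS2), ?_⟩
      · unfold Lam; nlinarith
      · have e1 : s' + 1 ≤ B := by omega
        have e2 : t1 ≤ B := by omega
        have e3 : t2 ≤ B := by omega
        have f1 : (s' + 1) * Lj ≤ B * Q.card ^ 2 := Nat.mul_le_mul e1 hLj
        have f2 := Nat.mul_le_mul_right Q.card e2
        have f3 := Nat.mul_le_mul_right Q.card e3
        unfold Lam; nlinarith
      · have : (s' + 1) • j + (t1 + 1) • c1 + t2 • c2 = c1 := by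
          simp only [smul_nat_eq]
          push_cast
          linear_combination h4
        rw [this, hz]
  · have : 0 < -t1 ∨ 0 < -t2 ∨ (s = 0 ∧ (0 < t1 ∨ 0 < t2)) := by omega
    have key2 : ∃ k m1 m2 : ℕ, z = r + k • j + m1 • c1 + m2 • c2 ∧ (m1 ≤ B ∨ m2 ≤ B) := by
      by_cases hneg : 0 < -t1 ∨ 0 < -t2
      · obtain ⟨k, m1, m2, m3, e1, e2, e3, hm⟩ := shift3 n1 n2 0 (-t1) (-t2) 0 (by tauto)
        refine ⟨k * s.toNat, m1, m2, ?_, by omega⟩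
        have hs : (s.toNat : ℤ) = s := Int.toNat_of_nonneg (by omega)
        rw [hz]
        simp only [smul_nat_eq, e1, e2]
        push_cast
        rw [hs]
        have : (k : ℤ) • (s • j + t1 • c1 + t2 • c2) = 0 := by rw [h4, smul_zero]
        linear_combination -this
      · obtain ⟨k, m1, m2, m3, e1, e2, e3, hm⟩ := shift3 n1 n2 0 t1 t2 0 (by omega)
        refine ⟨0, m1, m2, ?_, by omega⟩
        have hs : s = 0 := by omega
        rw [hz]
        simp only [smul_nat_eq, e1, e2]
        push_cast
        have : (k : ℤ) • (s • j + t1 • c1 + t2 • c2) = 0 := by rw [h4, smul_zero]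
        rw [hs] at this
        linear_combination this
    obtain ⟨k, m1, m2, hz, hm | hm⟩ := key2
    · exact fin k m1 m2 c1 c2 hc1 hc2 hm hz
    · exact fin k m2 m1 c2 c1 hc2 hc1 hm (by rw [hz]; abel)
end nf

end

section
/-- additive monoids with a subadditive size -/
class Nm (G : Type) [AddCommMonoid G] where
  ν : G → ℕ
  ν_zero : ν 0 = 0
  ν_add : ∀ x y, ν (x + y) ≤ ν x + ν y

instance instNmInt : Nm ℤ := ⟨Int.natAbs, rfl, Int.natAbs_add_le⟩

instance instNmProd {G H : Type} [AddCommMonoid G] [AddCommMonoid H] [Nm G] [Nm H] : Nm (G × H) :=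
  ⟨fun x => max (Nm.ν x.1) (Nm.ν x.2), by simp [Nm.ν_zero], fun x y => by
    have h1 := Nm.ν_add x.1 y.1
    have h2 := Nm.ν_add x.2 y.2
    simp only [Prod.fst_add, Prod.snd_add]
    omega⟩

lemma ν_int (x : ℤ) : Nm.ν x = x.natAbs := rfl
lemma ν_prod {G H : Type} [AddCommMonoid G] [AddCommMonoid H] [Nm G] [Nm H] (x : G × H) :
    Nm.ν x = max (Nm.ν x.1) (Nm.ν x.2) := rfl

section mon
variable {G H : Type} [AddCommMonoid G] [AddCommMonoid H] [Nm G] [Nm H]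

/-- generated by elements of size at most `a` -/
def BG (P : AddSubmonoid G) (a : ℕ) : Prop :=
  P ≤ AddSubmonoid.closure {x | x ∈ P ∧ Nm.ν x ≤ a}

lemma BG.mono {P : AddSubmonoid G} {a b : ℕ} (h : BG P a) (hab : a ≤ b) : BG P b :=
  h.trans (AddSubmonoid.closure_mono (fun _ hx => ⟨hx.1, hx.2.trans hab⟩))

lemma ν_list (l : List G) (a : ℕ) (h : ∀ x ∈ l, Nm.ν x ≤ a) : Nm.ν l.sum ≤ l.length * a := by
  induction l with
  | nil => simp [Nm.ν_zero]
  | cons x l ih =>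
    have h1 := ih (fun y hy => h y (by simp [hy]))
    have h2 := h x (by simp)
    have h3 := Nm.ν_add x l.sum
    simp only [List.sum_cons, List.length_cons]
    linarith

lemma order_list (φ : G →+ ℤ) (B : ℕ) (s : Multiset G) (hs : ∀ x ∈ s, |φ x| ≤ B)
    (h0 : φ s.sum = 0) : ∀ n ≤ s.card, ∃ l : List G, l.length = n ∧ (l : Multiset G) ≤ s ∧
      ∀ i ≤ n, |φ (l.take i).sum| ≤ B := by
  classical
  intro n
  induction n with
  | zero => intro _; exact ⟨[], rfl, by simp, by simp⟩
  | succ n ih =>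
    intro hn
    obtain ⟨l, hl, hle, hpre⟩ := ih (by omega)
    obtain ⟨r, hr⟩ := Multiset.le_iff_exists_add.1 hle
    have hcr : 0 < r.card := by
      have := congrArg Multiset.card hr
      simp at this; omega
    have hsum : φ l.sum + φ r.sum = 0 := by
      rw [← map_add, ← h0, hr]; simp
    have hlB : |φ l.sum| ≤ B := by
      have := hpre n le_rfl
      rwa [← hl, List.take_length] at this
    have hex : ∃ x ∈ r, |φ l.sum + φ x| ≤ B := by
      have hmem : ∀ x ∈ r, |φ x| ≤ B := fun x hx => hs x (by rw [hr]; simp [hx])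
      have hrs : φ r.sum = (r.map φ).sum := by rw [map_multiset_sum]
      rcases lt_or_ge 0 (φ l.sum) with hpos | hneg
      · have : ∃ x ∈ r, φ x < 0 := by
          by_contra hcon
          push Not at hcon
          have : 0 ≤ (r.map φ).sum := Multiset.sum_nonneg (by
            intro y hy
            obtain ⟨x, hx, rfl⟩ := Multiset.mem_map.1 hy
            exact hcon x hx)
          omega
        obtain ⟨x, hx, hx0⟩ := this
        have := hmem x hx
        refine ⟨x, hx, ?_⟩
        rw [abs_le] at *; omega
      · have : ∃ x ∈ r, 0 ≤ φ x := by
          by_contra hcon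
          push Not at hcon
          obtain ⟨x0, hx0⟩ := Multiset.card_pos_iff_exists_mem.1 hcr
          obtain ⟨t, rfl⟩ := Multiset.exists_cons_of_mem hx0
          have : 0 ≤ ((t.map φ).map (fun z => -z)).sum := Multiset.sum_nonneg (by
            intro y hy
            simp only [Multiset.mem_map] at hy
            obtain ⟨x, ⟨z, hz, rfl⟩, rfl⟩ := hy
            have := hcon z (by simp [hz])
            omega)
          rw [Multiset.sum_map_neg'] at this
          have h1 := hcon x0 (by simp)
          simp only [Multiset.map_cons, Multiset.sum_cons] at hrs
          rw [Multiset.sum_cons] at hsum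
          omega
        obtain ⟨x, hx, hx0⟩ := this
        have := hmem x hx
        refine ⟨x, hx, ?_⟩
        rw [abs_le] at *; omega
    obtain ⟨x, hx, hxB⟩ := hex
    refine ⟨l ++ [x], by simp [hl], ?_, ?_⟩
    · rw [hr, ← Multiset.coe_add]
      exact add_le_add_right (by simpa using hx) _
    · intro i hi
      rcases Nat.lt_or_ge n i with h | h
      · have : i = n + 1 := by omega
        subst this
        rw [List.take_of_length_le (by simp [hl])]
        simpa using hxB
      · rw [List.take_append_of_le_length (by omega)]
        exact hpre i h

lemma ker_aux (P : AddSubmonoid G) (φ : G →+ ℤ) (a B : ℕ) :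
    ∀ (n : ℕ) (s : Multiset G), s.card = n → (∀ x ∈ s, x ∈ P ∧ Nm.ν x ≤ a ∧ |φ x| ≤ B) →
      φ s.sum = 0 → s.sum ∈ AddSubmonoid.closure
        {x | x ∈ P ⊓ AddMonoidHom.mker φ ∧ Nm.ν x ≤ (2 * B + 1) * a} := by
  classical
  intro n
  induction n using Nat.strong_induction_on with
  | _ n ih =>
  intro s hn hs h0
  have small : ∀ l : List G, (l : Multiset G) ≤ s → l.length ≤ 2 * B + 1 → φ l.sum = 0 →
      l.sum ∈ AddSubmonoid.closure
        {x | x ∈ P ⊓ AddMonoidHom.mker φ ∧ Nm.ν x ≤ (2 * B + 1) * a} := by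
    intro l hls hlen hl0
    have hm : ∀ x ∈ l, x ∈ P ∧ Nm.ν x ≤ a ∧ |φ x| ≤ B :=
      fun x hx => hs x (Multiset.mem_of_le hls (by simpa using hx))
    apply AddSubmonoid.subset_closure
    refine ⟨⟨AddSubmonoid.list_sum_mem _ (fun x hx => (hm x hx).1), hl0⟩, ?_⟩
    exact (ν_list l a (fun x hx => (hm x hx).2.1)).trans (Nat.mul_le_mul_right _ hlen)
  rcases Nat.lt_or_ge (2 * B + 1) n with hlt | hge
  · obtain ⟨l, hl, hle, hpre⟩ := order_list φ B s (fun x hx => (hs x hx).2.2) h0 (2 * B + 1) (by omega)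
    have hpig : ∃ i ∈ Finset.range (2 * B + 2), ∃ j ∈ Finset.range (2 * B + 2), i ≠ j ∧
        φ (l.take i).sum = φ (l.take j).sum := by
      apply Finset.exists_ne_map_eq_of_card_lt_of_maps_to (t := Finset.Icc (-(B : ℤ)) B)
      · rw [Int.card_Icc, Finset.card_range]; omega
      · intro i hi
        have := hpre i (by simp at hi; omega)
        rw [abs_le] at this
        simpa using this
    have hpig' : ∃ i j, i < j ∧ j ≤ 2 * B + 1 ∧ φ (l.take i).sum = φ (l.take j).sum := by
      obtain ⟨i, hi, j, hj, hne, he⟩ := hpig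
      simp only [Finset.mem_range] at hi hj
      rcases lt_or_gt_of_ne hne with h | h
      · exact ⟨i, j, h, by omega, he⟩
      · exact ⟨j, i, h, by omega, he.symm⟩
    obtain ⟨i, j, hij, hj, he⟩ := hpig'
    have hsplit : l.take j = l.take i ++ (l.take j).drop i := by
      have := List.take_append_drop i (l.take j)
      rw [List.take_take, min_eq_left hij.le] at this
      exact this.symm
    set b := (l.take j).drop i with hb
    have hblen : b.length = j - i := by simp [hb, hl]; omega
    have hb0 : φ b.sum = 0 := by
      rw [hsplit, List.sum_append, map_add] at he
      omega
    have hbs : (b : Multiset G) ≤ s := by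
      refine le_trans ?_ hle
      rw [Multiset.coe_le]
      exact ((List.drop_sublist _ _).trans (List.take_sublist _ _)).subperm
    obtain ⟨r, hr⟩ := Multiset.le_iff_exists_add.1 hbs
    have hcard := congrArg Multiset.card hr
    rw [Multiset.card_add, Multiset.coe_card, hn] at hcard
    have hsum : s.sum = b.sum + r.sum := by rw [hr]; simp
    rw [hsum]
    refine add_mem (small b hbs (by omega) hb0) (ih r.card (by omega) r rfl ?_ ?_)
    · intro x hx
      exact hs x (by rw [hr]; simp [hx])
    · rw [hsum, map_add, hb0] at h0
      simpa using h0
  · have := small s.toList (by simp) (by simp; omega) (by simpa using h0)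
    simpa using this

lemma BG.ker {P : AddSubmonoid G} {a : ℕ} (h : BG P a) (φ : G →+ ℤ) {b : ℕ}
    (hb : ∀ x, (φ x).natAbs ≤ b * Nm.ν x) (ha1 : 1 ≤ a) (hb1 : 1 ≤ b) :
    BG (P ⊓ AddMonoidHom.mker φ) (3 * a ^ 2 * b) := by
  have hBG : BG (P ⊓ AddMonoidHom.mker φ) ((2 * (b * a) + 1) * a) := by
    intro x hx
    obtain ⟨hxP, hx0⟩ := hx
    obtain ⟨s, hs, rfl⟩ := AddSubmonoid.exists_multiset_of_mem_closure (h hxP)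
    refine ker_aux P φ a (b * a) _ s rfl ?_ hx0
    intro y hy
    obtain ⟨h1, h2⟩ := hs y hy
    refine ⟨h1, h2, ?_⟩
    have := (hb y).trans (Nat.mul_le_mul_left b h2)
    rw [Int.abs_eq_natAbs]
    exact_mod_cast this
  refine hBG.mono ?_
  have : a ≤ a ^ 2 * b := by nlinarith [Nat.mul_le_mul ha1 hb1]
  nlinarith

lemma BG.map {P : AddSubmonoid G} {a : ℕ} (h : BG P a) (f : G →+ H) {b : ℕ}
    (hb : ∀ x, Nm.ν (f x) ≤ b * Nm.ν x) : BG (P.map f) (b * a) := by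
  rintro _ ⟨x, hx, rfl⟩
  have := AddSubmonoid.mem_map_of_mem f (h hx)
  rw [AddMonoidHom.map_mclosure] at this
  refine AddSubmonoid.closure_mono ?_ this
  rintro _ ⟨y, ⟨hy1, hy2⟩, rfl⟩
  exact ⟨⟨y, hy1, rfl⟩, (hb y).trans (Nat.mul_le_mul_left b hy2)⟩

lemma BG.prod {P : AddSubmonoid G} {Q : AddSubmonoid H} {a : ℕ} (hP : BG P a) (hQ : BG Q a) :
    BG (P.prod Q) a := by
  rintro ⟨x, y⟩ ⟨hx, hy⟩
  have e : (x, y) = AddMonoidHom.inl G H x + AddMonoidHom.inr G H y := by simp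
  rw [e]
  refine add_mem ?_ ?_
  · have := AddSubmonoid.mem_map_of_mem (AddMonoidHom.inl G H) (hP hx)
    rw [AddMonoidHom.map_mclosure] at this
    refine AddSubmonoid.closure_mono ?_ this
    rintro _ ⟨z, ⟨hy1, hy2⟩, rfl⟩
    refine ⟨⟨hy1, Q.zero_mem⟩, ?_⟩
    simpa [ν_prod, Nm.ν_zero] using hy2
  · have := AddSubmonoid.mem_map_of_mem (AddMonoidHom.inr G H) (hQ hy)
    rw [AddMonoidHom.map_mclosure] at this
    refine AddSubmonoid.closure_mono ?_ this
    rintro _ ⟨z, ⟨hy1, hy2⟩, rfl⟩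
    refine ⟨⟨P.zero_mem, hy1⟩, ?_⟩
    simpa [ν_prod, Nm.ν_zero] using hy2
end mon

/-- nonnegative integers -/
noncomputable def NN : AddSubmonoid ℤ := AddSubmonoid.nonneg ℤ

lemma mem_NN (x : ℤ) : x ∈ NN ↔ 0 ≤ x := Iff.rfl

lemma BG_NN {a : ℕ} (ha : 1 ≤ a) : BG NN a := by
  intro x hx
  obtain ⟨n, rfl⟩ := Int.eq_ofNat_of_zero_le hx
  have : (n : ℤ) = n • (1 : ℤ) := by simp
  have h1 : (1 : ℤ) ∈ AddSubmonoid.closure {x : ℤ | x ∈ NN ∧ Nm.ν x ≤ a} :=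
    AddSubmonoid.subset_closure ⟨by rw [mem_NN]; norm_num, by simpa [ν_int] using ha⟩
  show (n : ℤ) ∈ _
  rw [this]
  exact AddSubmonoid.nsmul_mem _ h1 n

/-- (source, target, scale, cost) -/
abbrev G6 := V2 × V2 × ℤ × ℤ

lemma c6 (x : G6) : x.1.1.natAbs ≤ Nm.ν x ∧ x.1.2.natAbs ≤ Nm.ν x ∧ x.2.1.1.natAbs ≤ Nm.ν x ∧
    x.2.1.2.natAbs ≤ Nm.ν x ∧ x.2.2.1.natAbs ≤ Nm.ν x ∧ x.2.2.2.natAbs ≤ Nm.ν x := by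
  have h1 : Nm.ν x.1 ≤ Nm.ν x := le_max_left _ _
  have h2 : Nm.ν x.2 ≤ Nm.ν x := le_max_right _ _
  have h3 : Nm.ν x.2.1 ≤ Nm.ν x.2 := le_max_left _ _
  have h4 : Nm.ν x.2.2 ≤ Nm.ν x.2 := le_max_right _ _
  exact ⟨(le_max_left _ _).trans h1, (le_max_right _ _).trans h1,
    ((le_max_left _ _).trans h3).trans h2, ((le_max_right _ _).trans h3).trans h2,
    ((le_max_left _ _).trans h4).trans h2, ((le_max_right _ _).trans h4).trans h2⟩

lemma le6 (x : G6) (m : ℕ) (h1 : x.1.1.natAbs ≤ m) (h2 : x.1.2.natAbs ≤ m)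
    (h3 : x.2.1.1.natAbs ≤ m) (h4 : x.2.1.2.natAbs ≤ m) (h5 : x.2.2.1.natAbs ≤ m)
    (h6 : x.2.2.2.natAbs ≤ m) : Nm.ν x ≤ m :=
  max_le (max_le h1 h2) (max_le (max_le h3 h4) (max_le h5 h6))

lemma ν_fst {G H : Type} [AddCommMonoid G] [AddCommMonoid H] [Nm G] [Nm H] (x : G × H) :
    Nm.ν x.1 ≤ Nm.ν x := le_max_left _ _
lemma ν_snd {G H : Type} [AddCommMonoid G] [AddCommMonoid H] [Nm G] [Nm H] (x : G × H) :
    Nm.ν x.2 ≤ Nm.ν x := le_max_right _ _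

lemma subbd (x y : ℤ) (m : ℕ) (hx : x.natAbs ≤ m) (hy : y.natAbs ≤ m) :
    (x - y).natAbs ≤ 2 * m := by omega
lemma addbd (x y : ℤ) (m : ℕ) (hx : x.natAbs ≤ m) (hy : y.natAbs ≤ m) :
    (x + y).natAbs ≤ 2 * m := by omega

/-- first matching condition etc -/
def k1 : G6 × G6 →+ ℤ where
  toFun x := x.1.2.1.1 - x.2.1.1
  map_zero' := by simp
  map_add' x y := by simp; ring

def k2 : G6 × G6 →+ ℤ where
  toFun x := x.1.2.1.2 - x.2.1.2
  map_zero' := by simp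
  map_add' x y := by simp; ring

def k3 : G6 × G6 →+ ℤ where
  toFun x := x.1.2.2.1 - x.2.2.2.1
  map_zero' := by simp
  map_add' x y := by simp; ring

def kout : G6 × G6 →+ G6 where
  toFun x := (x.1.1, x.2.2.1, x.1.2.2.1, x.1.2.2.2 + x.2.2.2.2)
  map_zero' := by simp
  map_add' x y := by simp; ring

/-- composition of relations -/
def comp (P Q : AddSubmonoid G6) : AddSubmonoid G6 :=
  ((((P.prod Q) ⊓ AddMonoidHom.mker k1) ⊓ AddMonoidHom.mker k2) ⊓ AddMonoidHom.mker k3).map kout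

lemma mem_comp (P Q : AddSubmonoid G6) (w w' : V2) (k l : ℤ) : (w, w', k, l) ∈ comp P Q ↔
    ∃ m l1 l2, (w, m, k, l1) ∈ P ∧ (m, w', k, l2) ∈ Q ∧ l = l1 + l2 := by
  constructor
  · rintro ⟨⟨⟨x, x', xk, xl⟩, ⟨y, y', yk, yl⟩⟩, ⟨⟨⟨⟨h1, h2⟩, h3⟩, h4⟩, h5⟩, he⟩
    simp only [kout, AddMonoidHom.coe_mk, ZeroHom.coe_mk, Prod.mk.injEq] at he
    have e3 : x'.1 - y.1 = 0 := h3
    have e4 : x'.2 - y.2 = 0 := h4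
    have e5 : xk - yk = 0 := h5
    obtain ⟨rfl, rfl, rfl, rfl⟩ := he
    have : y = x' := by ext <;> omega
    have : yk = xk := by omega
    subst this
    subst y
    exact ⟨x', xl, yl, h1, h2, rfl⟩
  · rintro ⟨m, l1, l2, h1, h2, rfl⟩
    refine ⟨((w, m, k, l1), (m, w', k, l2)), ⟨⟨⟨⟨h1, h2⟩, ?_⟩, ?_⟩, ?_⟩, rfl⟩
    · show m.1 - m.1 = 0; ring
    · show m.2 - m.2 = 0; ring
    · show k - k = 0; ring

lemma BG.comp {P Q : AddSubmonoid G6} {a : ℕ} (ha : 2 ≤ a) (hP : BG P a) (hQ : BG Q a) :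
    BG (comp P Q) (a ^ 32) := by
  have cl : ∀ x : G6 × G6, _ := fun x => c6 x.1
  have cr : ∀ x : G6 × G6, _ := fun x => c6 x.2
  have h1 := (hP.prod hQ).ker k1 (b := 2) (fun x => subbd _ _ _
    ((cl x).2.2.1.trans (ν_fst x)) ((cr x).1.trans (ν_snd x))) (by omega) (by omega)
  have h2 := h1.ker k2 (b := 2) (fun x => subbd _ _ _
    ((cl x).2.2.2.1.trans (ν_fst x)) ((cr x).2.1.trans (ν_snd x)))
    (Nat.succ_le_of_lt (by positivity)) (by omega)
  have h3 := h2.ker k3 (b := 2) (fun x => subbd _ _ _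
    ((cl x).2.2.2.2.1.trans (ν_fst x)) ((cr x).2.2.2.2.1.trans (ν_snd x)))
    (Nat.succ_le_of_lt (by positivity)) (by omega)
  have h4 := h3.map kout (b := 2) (fun x => by
    have hl := ν_fst x
    have hr := ν_snd x
    obtain ⟨a1, a2, a3, a4, a5, a6⟩ := cl x
    obtain ⟨b1, b2, b3, b4, b5, b6⟩ := cr x
    have h2 : ∀ m : ℕ, m ≤ Nm.ν x → m ≤ 2 * Nm.ν x := fun m hm => by omega
    exact le6 _ _ (h2 _ (a1.trans hl)) (h2 _ (a2.trans hl)) (h2 _ (b3.trans hr))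
      (h2 _ (b4.trans hr)) (h2 _ (a5.trans hl)) (addbd _ _ _ (a6.trans hl) (b6.trans hr)))
  refine h4.mono ?_
  have e : 2 * (3 * (3 * (3 * a ^ 2 * 2) ^ 2 * 2) ^ 2 * 2) = 559872 * a ^ 8 := by ring
  rw [e]
  have : 2 ^ 24 ≤ a ^ 24 := Nat.pow_le_pow_left ha 24
  calc 559872 * a ^ 8 ≤ a ^ 24 * a ^ 8 := Nat.mul_le_mul_right _ (by omega)
    _ = _ := by ring

def s1 (u : V2) : ℤ × G6 →+ ℤ where
  toFun x := x.2.1.1 - x.1 * u.1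
  map_zero' := by simp
  map_add' x y := by simp; ring
def s2 (u : V2) : ℤ × G6 →+ ℤ where
  toFun x := x.2.1.2 - x.1 * u.2
  map_zero' := by simp
  map_add' x y := by simp; ring
def s3 (u : V2) : ℤ × G6 →+ ℤ where
  toFun x := x.2.2.1.1 - x.1 * u.1
  map_zero' := by simp
  map_add' x y := by simp; ring
def s4 (u : V2) : ℤ × G6 →+ ℤ where
  toFun x := x.2.2.1.2 - x.1 * u.2
  map_zero' := by simp
  map_add' x y := by simp; ring
def s5 : ℤ × G6 →+ ℤ where
  toFun x := x.2.2.2.1 - x.1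
  map_zero' := by simp
  map_add' x y := by simp; ring

lemma sbd (x t u : ℤ) (B m : ℕ) (hx : x.natAbs ≤ m) (ht : t.natAbs ≤ m) (hu : |u| ≤ B) :
    (x - t * u).natAbs ≤ (B + 1) * m := by
  have h1 : (x - t * u).natAbs ≤ x.natAbs + (t * u).natAbs := Int.natAbs_sub_le _ _
  rw [Int.natAbs_mul] at h1
  have hu' : u.natAbs ≤ B := by rw [Int.abs_eq_natAbs] at hu; exact_mod_cast hu
  have := Nat.mul_le_mul ht hu'
  nlinarith

lemma small_sol {P : AddSubmonoid G6} {a B : ℕ} (ha : 1 ≤ a) (hP : BG P a) {u v : V2} {l : ℤ}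
    (hu : nb u B) (hv : nb v B) (h : (u, v, 1, l) ∈ P) :
    ∃ l', (u, v, 1, l') ∈ P ∧ l' ≤ ((3 * (B + 1)) ^ 32 * a ^ 32 : ℕ) := by
  have h0 : BG (NN.prod P) a := (BG_NN ha).prod hP
  have h1 := h0.ker (s1 u) (b := B + 1) (fun x => sbd _ _ _ _ _
    ((c6 x.2).1.trans (ν_snd x)) (ν_fst x) hu.1) ha (by omega)
  have h2 := h1.ker (s2 u) (b := B + 1) (fun x => sbd _ _ _ _ _
    ((c6 x.2).2.1.trans (ν_snd x)) (ν_fst x) hu.2) (Nat.succ_le_of_lt (by positivity)) (by omega)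
  have h3 := h2.ker (s3 v) (b := B + 1) (fun x => sbd _ _ _ _ _
    ((c6 x.2).2.2.1.trans (ν_snd x)) (ν_fst x) hv.1) (Nat.succ_le_of_lt (by positivity)) (by omega)
  have h4 := h3.ker (s4 v) (b := B + 1) (fun x => sbd _ _ _ _ _
    ((c6 x.2).2.2.2.1.trans (ν_snd x)) (ν_fst x) hv.2) (Nat.succ_le_of_lt (by positivity)) (by omega)
  have h5 := h4.ker s5 (b := 2) (fun x => subbd _ _ _
    ((c6 x.2).2.2.2.2.1.trans (ν_snd x)) (ν_fst x)) (Nat.succ_le_of_lt (by positivity)) (by omega)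
  have hmem : ((1, u, v, 1, l) : ℤ × G6) ∈ (((((NN.prod P) ⊓ AddMonoidHom.mker (s1 u)) ⊓
      AddMonoidHom.mker (s2 u)) ⊓ AddMonoidHom.mker (s3 v)) ⊓ AddMonoidHom.mker (s4 v)) ⊓
      AddMonoidHom.mker s5 := by
    refine ⟨⟨⟨⟨⟨⟨?_, h⟩, ?_⟩, ?_⟩, ?_⟩, ?_⟩, ?_⟩
    · show (0 : ℤ) ≤ 1; norm_num
    · show u.1 - 1 * u.1 = 0; ring
    · show u.2 - 1 * u.2 = 0; ring
    · show v.1 - 1 * v.1 = 0; ring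
    · show v.2 - 1 * v.2 = 0; ring
    · show (1 : ℤ) - 1 = 0; ring
  obtain ⟨s, hs, hsum⟩ := AddSubmonoid.exists_multiset_of_mem_closure (h5 hmem)
  have hex : ∃ y ∈ s, y.1 = 1 := by
    have hst : (s.map (fun y => y.1)).sum = 1 := by
      have := congrArg (AddMonoidHom.fst ℤ G6) hsum
      rw [map_multiset_sum] at this
      simpa using this
    have hnn : ∀ y ∈ s, 0 ≤ y.1 := fun y hy => (hs y hy).1.1.1.1.1.1.1
    by_contra hcon
    push Not at hcon
    have hz : ∀ y ∈ s, y.1 = 0 := by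
      intro y hy
      have h1 : y.1 ≤ (s.map (fun y => y.1)).sum :=
        Multiset.single_le_sum (by simpa using fun a b hb => hnn (a, b) hb) _
          (Multiset.mem_map_of_mem _ hy)
      have := hcon y hy
      have := hnn y hy
      omega
    rw [Multiset.map_congr rfl hz] at hst
    simp at hst
  obtain ⟨⟨t, w, w', k, l'⟩, hy, ht⟩ := hex
  obtain ⟨⟨⟨⟨⟨⟨⟨_, g0⟩, g1⟩, g2⟩, g3⟩, g4⟩, g5⟩, gν⟩ := hs _ hy
  simp only at ht
  subst ht
  have e1 : w.1 - 1 * u.1 = 0 := g1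
  have e2 : w.2 - 1 * u.2 = 0 := g2
  have e3 : w'.1 - 1 * v.1 = 0 := g3
  have e4 : w'.2 - 1 * v.2 = 0 := g4
  have e5 : k - 1 = 0 := g5
  have e6 : w = u := by ext <;> omega
  have e7 : w' = v := by ext <;> omega
  have e8 : k = 1 := by omega
  subst e6 e7 e8
  refine ⟨l', g0, ?_⟩
  have g6 := ((c6 (w, w', 1, l')).2.2.2.2.2.trans (ν_snd (1, w, w', 1, l'))).trans gν
  have : l'.natAbs ≤ (3 * (B + 1)) ^ 32 * a ^ 32 := by
    refine g6.trans ?_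
    clear * -
    have hx : 1 ≤ B + 1 := by omega
    generalize B + 1 = x at *
    have e : 3 * (3 * (3 * (3 * (3 * a ^ 2 * x) ^ 2 * x) ^ 2 * x) ^ 2 * x) ^ 2 * 2 =
      (2 * 3 ^ 31 * x ^ 30) * a ^ 32 := by ring
    rw [e, mul_pow]
    refine Nat.mul_le_mul_right _ (Nat.mul_le_mul (by norm_num) (Nat.pow_le_pow_right hx (by omega)))
  exact (Int.le_natAbs).trans (by exact_mod_cast this)

end

section
/-- parameters of a piece: scale, source slack, target slack, two multiplicities -/
abbrev G7 := ℤ × V2 × V2 × ℤ × ℤ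

noncomputable def NN7 : AddSubmonoid G7 :=
  NN.prod ((NN.prod NN).prod ((NN.prod NN).prod (NN.prod NN)))

lemma BG_NN7 : BG NN7 1 :=
  (BG_NN le_rfl).prod (((BG_NN le_rfl).prod (BG_NN le_rfl)).prod
    (((BG_NN le_rfl).prod (BG_NN le_rfl)).prod ((BG_NN le_rfl).prod (BG_NN le_rfl))))

def pcon (t t' x b c d : ℤ) (pr : V2 →+ ℤ) : G7 →+ ℤ where
  toFun g := g.1 * t' + x * pr g.2.2.1 - g.1 * t - x * pr g.2.1 - (g.1 * b + g.2.2.2.1 * c + g.2.2.2.2 * d)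
  map_zero' := by simp
  map_add' x y := by simp; ring

def pout (θ θ' χ : V2) : G7 →+ G6 where
  toFun g := (g.1 • θ + χ * g.2.1, g.1 • θ' + χ * g.2.2.1, g.1,
    (g.1 • θ + χ * g.2.1).1 + (g.1 • θ + χ * g.2.1).2)
  map_zero' := by simp
  map_add' x y := by
    ext <;> simp <;> ring

/-- the monoid of a piece -/
noncomputable def piece (θ θ' χ β c d : V2) : AddSubmonoid G6 :=
  ((NN7 ⊓ AddMonoidHom.mker (pcon θ.1 θ'.1 χ.1 β.1 c.1 d.1 (AddMonoidHom.fst ℤ ℤ))) ⊓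
    AddMonoidHom.mker (pcon θ.2 θ'.2 χ.2 β.2 c.2 d.2 (AddMonoidHom.snd ℤ ℤ))).map (pout θ θ' χ)

lemma c7 (x : G7) : x.1.natAbs ≤ Nm.ν x ∧ x.2.1.1.natAbs ≤ Nm.ν x ∧ x.2.1.2.natAbs ≤ Nm.ν x ∧
    x.2.2.1.1.natAbs ≤ Nm.ν x ∧
    x.2.2.1.2.natAbs ≤ Nm.ν x ∧ x.2.2.2.1.natAbs ≤ Nm.ν x ∧ x.2.2.2.2.natAbs ≤ Nm.ν x := by
  obtain ⟨h1, h2, h3, h4, h5, h6⟩ := c6 x.2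
  have := ν_snd x
  exact ⟨ν_fst x, h1.trans this, h2.trans this, h3.trans this, h4.trans this, h5.trans this,
    h6.trans this⟩

lemma absle {x : ℤ} {m : ℕ} (h : x.natAbs ≤ m) : |x| ≤ m := by
  rw [Int.abs_eq_natAbs]; exact_mod_cast h

lemma mul_abs_le {x y : ℤ} {a b : ℕ} (hx : |x| ≤ a) (hy : |y| ≤ b) : |x * y| ≤ (a * b : ℕ) := by
  rw [abs_mul]; push_cast; exact mul_le_mul hx hy (abs_nonneg _) (by positivity)

lemma pcon_bd {t t' x b c d : ℤ} {B : ℕ} (ht : |t| ≤ B) (ht' : |t'| ≤ B) (hx : |x| ≤ B)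
    (hb : |b| ≤ B) (hc : |c| ≤ B) (hd : |d| ≤ B) (g s s' K m : ℤ) (n : ℕ)
    (h1 : g.natAbs ≤ n) (h2 : s.natAbs ≤ n) (h3 : s'.natAbs ≤ n) (h4 : K.natAbs ≤ n)
    (h5 : m.natAbs ≤ n) :
    (g * t' + x * s' - g * t - x * s - (g * b + K * c + m * d)).natAbs ≤ (7 * B) * n := by
  have e1 := abs_le.1 (mul_abs_le (absle h1) ht')
  have e2 := abs_le.1 (mul_abs_le hx (absle h3))
  have e3 := abs_le.1 (mul_abs_le (absle h1) ht)
  have e4 := abs_le.1 (mul_abs_le hx (absle h2))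
  have e5 := abs_le.1 (mul_abs_le (absle h1) hb)
  have e6 := abs_le.1 (mul_abs_le (absle h4) hc)
  have e7 := abs_le.1 (mul_abs_le (absle h5) hd)
  have : |g * t' + x * s' - g * t - x * s - (g * b + K * c + m * d)| ≤ (7 * B * n : ℕ) := by
    rw [abs_le]; push_cast at *; constructor <;> linarith
  rw [Int.abs_eq_natAbs] at this
  exact_mod_cast this

lemma pout_bd {t x : ℤ} {B : ℕ} (ht : |t| ≤ B) (hx : |x| ≤ B) (g s : ℤ) (n : ℕ)
    (h1 : g.natAbs ≤ n) (h2 : s.natAbs ≤ n) : (g * t + x * s).natAbs ≤ 2 * B * n := by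
  have e3 := abs_le.1 (mul_abs_le (absle h1) ht)
  have e4 := abs_le.1 (mul_abs_le hx (absle h2))
  have : |g * t + x * s| ≤ (2 * B * n : ℕ) := by
    rw [abs_le]; push_cast at *; constructor <;> linarith
  rw [Int.abs_eq_natAbs] at this
  exact_mod_cast this

lemma BG_piece {θ θ' χ β c d : V2} {B : ℕ} (hB : 1 ≤ B) (h1 : nb θ B) (h2 : nb θ' B) (h3 : nb χ B)
    (h4 : nb β B) (h5 : nb c B) (h6 : nb d B) : BG (piece θ θ' χ β c d) (2 ^ 16 * B ^ 4) := by
  have a1 := BG_NN7.ker (pcon θ.1 θ'.1 χ.1 β.1 c.1 d.1 (AddMonoidHom.fst ℤ ℤ)) (b := 7 * B)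
    (fun x => by
      obtain ⟨e1, e2, e3, e4, e5, e6, e7⟩ := c7 x
      exact pcon_bd h1.1 h2.1 h3.1 h4.1 h5.1 h6.1 _ _ _ _ _ _ e1 e2 e4 e6 e7) le_rfl (by omega)
  have a2 := a1.ker (pcon θ.2 θ'.2 χ.2 β.2 c.2 d.2 (AddMonoidHom.snd ℤ ℤ)) (b := 7 * B)
    (fun x => by
      obtain ⟨e1, e2, e3, e4, e5, e6, e7⟩ := c7 x
      exact pcon_bd h1.2 h2.2 h3.2 h4.2 h5.2 h6.2 _ _ _ _ _ _ e1 e3 e5 e6 e7) (by omega) (by omega)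
  have a3 := a2.map (pout θ θ' χ) (b := 4 * B) (fun x => by
      obtain ⟨e1, e2, e3, e4, e5, e6, e7⟩ := c7 x
      have f1 : (x.1 • θ + χ * x.2.1).1.natAbs ≤ 2 * B * Nm.ν x := pout_bd h1.1 h3.1 _ _ _ e1 e2
      have f2 : (x.1 • θ + χ * x.2.1).2.natAbs ≤ 2 * B * Nm.ν x := pout_bd h1.2 h3.2 _ _ _ e1 e3
      have f3 : (x.1 • θ' + χ * x.2.2.1).1.natAbs ≤ 2 * B * Nm.ν x := pout_bd h2.1 h3.1 _ _ _ e1 e4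
      have f4 : (x.1 • θ' + χ * x.2.2.1).2.natAbs ≤ 2 * B * Nm.ν x := pout_bd h2.2 h3.2 _ _ _ e1 e5
      have g1 : 2 * B * Nm.ν x ≤ 4 * B * Nm.ν x := Nat.mul_le_mul_right _ (by omega)
      have g2 : x.1.natAbs ≤ 4 * B * Nm.ν x := by nlinarith
      refine le6 _ _ (f1.trans g1) (f2.trans g1) (f3.trans g1) (f4.trans g1) g2 ?_
      exact (addbd _ _ _ f1 f2).trans (by linarith))
  refine BG.mono a3 ?_
  have : 4 * B * (3 * (3 * 1 ^ 2 * (7 * B)) ^ 2 * (7 * B)) = 37044 * B ^ 4 := by ring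
  rw [this]
  exact Nat.mul_le_mul_right _ (by norm_num)

lemma mem_piece (θ θ' χ β c d w w' : V2) (k l : ℤ) : (w, w', k, l) ∈ piece θ θ' χ β c d ↔
    0 ≤ k ∧ ∃ (s s' : V2) (K m : ℕ), 0 ≤ s.1 ∧ 0 ≤ s.2 ∧ 0 ≤ s'.1 ∧ 0 ≤ s'.2 ∧
      w = k • θ + χ * s ∧ w' = k • θ' + χ * s' ∧ w' = w + (k • β + K • c + m • d) ∧
      l = w.1 + w.2 := by
  constructor
  · rintro ⟨⟨k', s, s', K, m⟩, ⟨⟨h1, h2⟩, h3⟩, he⟩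
    obtain ⟨p1, ⟨p2, p3⟩, ⟨p4, p5⟩, p6, p7⟩ := h1
    simp only [pout, AddMonoidHom.coe_mk, ZeroHom.coe_mk, Prod.mk.injEq] at he
    obtain ⟨e1, e2, e3, e4⟩ := he
    subst e3
    change 0 ≤ K at p6
    change 0 ≤ m at p7
    obtain ⟨K, rfl⟩ := Int.eq_ofNat_of_zero_le p6
    obtain ⟨m, rfl⟩ := Int.eq_ofNat_of_zero_le p7
    change k' * θ'.1 + χ.1 * s'.1 - k' * θ.1 - χ.1 * s.1 - (k' * β.1 + K * c.1 + m * d.1) = 0 at h2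
    change k' * θ'.2 + χ.2 * s'.2 - k' * θ.2 - χ.2 * s.2 - (k' * β.2 + K * c.2 + m * d.2) = 0 at h3
    refine ⟨p1, s, s', K, m, p2, p3, p4, p5, e1.symm, e2.symm, ?_, ?_⟩
    · rw [← e1, ← e2]
      ext
      · simp; linarith
      · simp; linarith
    · rw [← e4, e1]
  · rintro ⟨hk, s, s', K, m, p2, p3, p4, p5, h1, h2, h3, h4⟩
    refine ⟨(k, s, s', K, m), ⟨⟨⟨hk, ⟨p2, p3⟩, ⟨p4, p5⟩, ?_, ?_⟩, ?_⟩, ?_⟩, ?_⟩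
    · show (0 : ℤ) ≤ K; positivity
    · show (0 : ℤ) ≤ m; positivity
    · show k * θ'.1 + χ.1 * s'.1 - k * θ.1 - χ.1 * s.1 - (k * β.1 + K * c.1 + m * d.1) = 0
      rw [h1, h2] at h3
      have := congrArg Prod.fst h3
      simp at this; linarith
    · show k * θ'.2 + χ.2 * s'.2 - k * θ.2 - χ.2 * s.2 - (k * β.2 + K * c.2 + m * d.2) = 0
      rw [h1, h2] at h3
      have := congrArg Prod.snd h3
      simp at this; linarith
    · show ((k • θ + χ * s, k • θ' + χ * s', k, (k • θ + χ * s).1 + (k • θ + χ * s).2) : G6) = _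
      rw [← h1, ← h2, ← h4]

/-- box -/
def box (R : ℤ) : Set (ℕ × V2) := {c | (0 ≤ c.2.1 ∧ c.2.1 ≤ R) ∧ 0 ≤ c.2.2 ∧ c.2.2 ≤ R}

lemma mem_box (R : ℤ) (c : ℕ × V2) :
    c ∈ box R ↔ (0 ≤ c.2.1 ∧ c.2.1 ≤ R) ∧ 0 ≤ c.2.2 ∧ c.2.2 ≤ R := Iff.rfl

lemma box_mono {R R' : ℤ} (h : R ≤ R') : box R ⊆ box R' := by
  intro c hc
  rw [mem_box] at *
  omega

/-- soundness of a monoid for runs from `p` to `q` -/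
def Sound (E : ℕ → V2 → ℕ → Prop) (P : AddSubmonoid G6) (p q : ℕ) (Δ : ℤ) : Prop :=
  ∀ w w' l, (w, w', 1, l) ∈ P → 0 ≤ w.1 ∧ 0 ≤ w.2 ∧ 0 ≤ w'.1 ∧ 0 ≤ w'.2 ∧ w.1 + w.2 ≤ l ∧
    RT E (box (l + (w'.1 + w'.2) + Δ)) (p, w) (q, w')

variable {E : ℕ → V2 → ℕ → Prop}

lemma Sound.comp {P P' : AddSubmonoid G6} {p q r : ℕ} {Δ : ℤ} (h : Sound E P p q Δ)
    (h' : Sound E P' q r Δ) : Sound E (comp P P') p r Δ := by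
  intro w w' l hm
  obtain ⟨m, l1, l2, h1, h2, rfl⟩ := (mem_comp _ _ _ _ _ _).1 hm
  obtain ⟨a1, a2, a3, a4, a5, a6⟩ := h _ _ _ h1
  obtain ⟨b1, b2, b3, b4, b5, b6⟩ := h' _ _ _ h2
  refine ⟨a1, a2, b3, b4, by linarith, ?_⟩
  exact (RT.mono (box_mono (by linarith)) a6).trans (RT.mono (box_mono (by linarith)) b6)

/-- two configurations joined by a piece -/
def PR (E : ℕ → V2 → ℕ → Prop) (a : ℕ) (Δ : ℤ) (c c' : ℕ × V2) : Prop :=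
  ∃ P, BG P a ∧ Sound E P c.1 c'.1 Δ ∧ ∃ l, (c.2, c'.2, 1, l) ∈ P

lemma PR.comp {a : ℕ} (ha : 2 ≤ a) {Δ : ℤ} {c c' c''} (h : PR E a Δ c c') (h' : PR E a Δ c' c'') :
    PR E (a ^ 32) Δ c c'' := by
  obtain ⟨P, h1, h2, l, h3⟩ := h
  obtain ⟨P', h1', h2', l', h3'⟩ := h'
  exact ⟨_, h1.comp ha h1', h2.comp h2', _, (mem_comp _ _ _ _ _ _).2 ⟨_, _, _, h3, h3', rfl⟩⟩

/-- nonnegative configurations -/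
def NNeg (c : ℕ × V2) : Prop := 0 ≤ c.2.1 ∧ 0 ≤ c.2.2

lemma PR.ofStep {B : ℕ} (hB : 1 ≤ B) {c c' : ℕ × V2} {z : V2} (hz : nb z B) (hc : NNeg c) (hc' : NNeg c')
    (he : c'.2 = c.2 + z) (hstep : (z = 0 ∧ c.1 = c'.1) ∨ E c.1 z c'.1) :
    PR E (2 ^ 16 * B ^ 4) B c c' := by
  obtain ⟨z1, z2⟩ := z
  obtain ⟨p, x, y⟩ := c
  obtain ⟨q, x', y'⟩ := c'
  simp only [NNeg, nb, abs_le] at *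
  simp only [Prod.mk_add_mk, Prod.mk.injEq] at he
  refine ⟨piece (max 0 (-z1), max 0 (-z2)) (max 0 z1, max 0 z2) (1, 1) (z1, z2) 0 0, ?_, ?_, ?_⟩
  · have hB' : (1 : ℤ) ≤ B := by exact_mod_cast hB
    refine BG_piece hB ?_ ?_ ?_ ?_ (nb_zero B) (nb_zero B) <;> simp only [nb, abs_le] <;> omega
  · intro w w' l hm
    rw [mem_piece] at hm
    obtain ⟨-, s, s', K, m, p2, p3, p4, p5, h1, h2, h3, h4⟩ := hm
    obtain ⟨w1, w2⟩ := w
    obtain ⟨v1, v2⟩ := w'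
    simp only [one_smul, smul_zero, add_zero, Prod.ext_iff, Prod.fst_add, Prod.snd_add,
      Prod.fst_mul, Prod.snd_mul, one_mul] at h1 h2 h3 h4
    refine ⟨by omega, by omega, by omega, by omega, by omega, ?_⟩
    rcases hstep with ⟨h0, rfl⟩ | hE
    · simp only [Prod.ext_iff, Prod.fst_zero, Prod.snd_zero] at h0
      have e1 : v1 = w1 := by omega
      have e2 : v2 = w2 := by omega
      subst e1 e2
      exact Relation.ReflTransGen.refl
    · refine Relation.ReflTransGen.single ⟨(z1, z2), hE, ?_, ?_, ?_⟩
      · ext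
        · exact h3.1
        · exact h3.2
      · rw [mem_box]; dsimp only; omega
      · rw [mem_box]; dsimp only; omega
  · refine ⟨x + y, ?_⟩
    rw [mem_piece]
    refine ⟨by norm_num, (x - max 0 (-z1), y - max 0 (-z2)), (x - max 0 (-z1), y - max 0 (-z2)), 0, 0, ?_⟩
    simp only [one_smul, smul_zero, add_zero, Prod.ext_iff, Prod.fst_add, Prod.snd_add,
      Prod.fst_mul, Prod.snd_mul, one_mul]
    refine ⟨?_, ?_, ?_, ?_, ?_, ?_, ?_, trivial⟩ <;> omega

lemma PR.refl {B : ℕ} (hB : 1 ≤ B) {c : ℕ × V2} (hc : NNeg c) : PR E (2 ^ 16 * B ^ 4) B c c :=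
  PR.ofStep hB (nb_zero B) hc hc (by simp) (Or.inl ⟨rfl, rfl⟩)

/-- interior piece -/
lemma PR.ofI {M : ℕ} {Q : Finset ℕ} (hQ : ∀ p e q, E p e q → q ∈ Q)
    (hE : ∀ p e q, E p e q → nb e M) (hM : 1 ≤ M) {p z L S} (h : Wk E p p z L S) (hp : p ∈ Q)
    {D B : ℕ} (hD : 5 * (Lam Q.card M * M) ≤ D) (hB : D ≤ B) {w : V2}
    (h1 : D ≤ w.1) (h2 : D ≤ w.2) (h3 : D ≤ (w + z).1) (h4 : D ≤ (w + z).2) :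
    PR E (2 ^ 16 * B ^ 4) B (p, w) (p, w + z) := by
  obtain ⟨r, Lr, Sr, j, Lj, Sj, K, m, c, hr, hj, hLr, hLj, hc, hz⟩ := h.nfI hQ hE hM hp
  have hN : 1 ≤ Q.card := Finset.card_pos.2 ⟨p, hp⟩
  have hNL : Q.card ≤ Lam Q.card M := by
    obtain ⟨b1, _⟩ := lam_bd hN hM
    unfold Lam; nlinarith
  have hLM : 1 ≤ Lam Q.card M * M := Nat.mul_pos (by omega) hM
  have dr : nb r (Lam Q.card M * M) := nb_mono (hr.disp hE) (Nat.mul_le_mul_right M hLr)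
  have dj : nb j (Lam Q.card M * M) := nb_mono (hj.disp hE) (Nat.mul_le_mul_right M hLj)
  have dc : nb c (Lam Q.card M * M) := nb_mono (hc.disp hE) (Nat.mul_le_mul_right M hNL)
  refine ⟨piece (D, D) (D, D) (1, 1) (r + j) j c, ?_, ?_, ?_⟩
  · refine BG_piece (by omega) ?_ ?_ ?_ (nb_mono (nb_add dr dj) (by omega)) (nb_mono dj (by omega))
      (nb_mono dc (by omega)) <;> simp only [nb, abs_le] <;> omega
  · intro w w' l hm
    rw [mem_piece] at hm
    obtain ⟨-, s, s', K, m, p2, p3, p4, p5, h1, h2, h3, h4⟩ := hm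
    have e : w' = w + r + (K + 1) • j + m • c := by
      rw [h3, one_smul, succ_nsmul]; abel
    have run := straight hE hr hj hc hLr hLj hNL w K m
    rw [← e] at run
    simp only [one_smul, Prod.ext_iff, Prod.fst_add, Prod.snd_add, Prod.fst_mul, Prod.snd_mul,
      one_mul] at h1 h2
    refine ⟨by omega, by omega, by omega, by omega, by omega, ?_⟩
    refine RT.mono ?_ run
    intro x hx
    have hx : x.2 ∈ Rect w w' (5 * (Lam Q.card M * M)) := hx
    rw [mem_Rect] at hx
    rw [mem_box]
    omega
  · refine ⟨w.1 + w.2, ?_⟩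
    rw [mem_piece]
    refine ⟨by norm_num, w - ((D : ℤ), (D : ℤ)), w + z - ((D : ℤ), (D : ℤ)), K, m, by simpa using h1, by simpa using h2,
      by simpa using h3, by simpa using h4, ?_, ?_, ?_, rfl⟩
    · ext <;> simp
    · ext <;> simp
    · show w + z = w + _
      rw [hz, one_smul, succ_nsmul]; abel

end

section
variable {E : ℕ → V2 → ℕ → Prop}

/-- graph with the first coordinate in the vertices -/
def EV (E : ℕ → V2 → ℕ → Prop) (D : ℕ) (a : ℕ × ℤ) (e : V2) (b : ℕ × ℤ) : Prop :=
  E a.1 e b.1 ∧ b.2 = a.2 + e.1 ∧ 0 ≤ a.2 ∧ a.2 < D ∧ 0 ≤ b.2 ∧ b.2 < D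

noncomputable def QV (Q : Finset ℕ) (D : ℕ) : Finset (ℕ × ℤ) := Q ×ˢ Finset.Ico (0 : ℤ) D

lemma QV_card (Q : Finset ℕ) (D : ℕ) : (QV Q D).card = Q.card * D := by
  simp [QV]

lemma mem_QV (Q : Finset ℕ) (D : ℕ) (a : ℕ × ℤ) : a ∈ QV Q D ↔ a.1 ∈ Q ∧ 0 ≤ a.2 ∧ a.2 < D := by
  simp [QV]

lemma EV_disp {D : ℕ} {a b z L S} (h : Wk (EV E D) a b z L S) : b.2 = a.2 + z.1 := by
  induction h with
  | nil => simp
  | snoc h e ih =>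
    rw [e.2.1, ih]; simp [add_assoc]

lemma EV_lift {D : ℕ} {A : Set V2} {B : Set (ℕ × V2)}
    (hAB : ∀ c : ℕ × V2, 0 ≤ c.2.1 → c.2.1 < D → c.2 ∈ A → c ∈ B) {a : ℕ × ℤ} {u : V2} (hu : u.1 = a.2)
    {y : (ℕ × ℤ) × V2} (h : RT (EV E D) (reg _ A) (a, u) y) :
    RT E B (a.1, u) (y.1.1, y.2) ∧ y.2.1 = y.1.2 := by
  induction h with
  | refl => exact ⟨Relation.ReflTransGen.refl, hu⟩
  | tail h1 h2 ih =>
    obtain ⟨ih1, ih2⟩ := ih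
    obtain ⟨e, ⟨e1, e2, e3, e4, e5, e6⟩, h3, h4, h5⟩ := h2
    have hx := congrArg Prod.fst h3
    simp only [Prod.fst_add] at hx
    refine ⟨ih1.tail ⟨e, e1, h3, ?_, ?_⟩, by omega⟩
    · exact hAB _ (by dsimp only; omega) (by dsimp only; omega) h4
    · exact hAB _ (by dsimp only; omega) (by dsimp only; omega) h5

lemma interp (a c x : ℤ) (k m e : ℕ) (hk : k ≤ m) (hx : |x - (a + k * c)| ≤ e) :
    min a (a + m * c) - e ≤ x ∧ x ≤ max a (a + m * c) + e := by
  rw [abs_le] at hx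
  have hk' : (k : ℤ) ≤ m := by exact_mod_cast hk
  have hk0 : (0 : ℤ) ≤ k := by positivity
  rcases le_total 0 c with h | h
  · have h1 := mul_nonneg hk0 h
    have h2 := mul_nonneg (sub_nonneg.2 hk') h
    constructor
    · linarith [min_le_left a (a + m * c)]
    · nlinarith [le_max_right a (a + m * c)]
  · have h1 := mul_nonpos_of_nonneg_of_nonpos hk0 h
    have h2 := mul_nonpos_of_nonneg_of_nonpos (sub_nonneg.2 hk') h
    constructor
    · nlinarith [min_le_right a (a + m * c)]
    · linarith [le_max_left a (a + m * c)]

/-- vertical piece -/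
lemma PR.ofV {M : ℕ} {Q : Finset ℕ} (hQ : ∀ p e q, E p e q → q ∈ Q)
    (hE : ∀ p e q, E p e q → nb e M) (hM : 1 ≤ M) {D B : ℕ} {p q : ℕ} {x x' : ℤ} {z L S}
    (h : Wk (EV E D) (p, x) (q, x') z L S) (hp : p ∈ Q) (hx0 : 0 ≤ x) (hxD : x < D)
    (hB : 3 * (Lam (Q.card * D) M * M) ≤ B) (hDB : D ≤ B) {w : V2}
    (h1 : w.1 = x) (h2 : B ≤ w.2) (h3 : B ≤ (w + z).2) :
    PR E (2 ^ 16 * B ^ 4) B (p, w) (q, w + z) := by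
  have hE' : ∀ a e b, EV E D a e b → nb e M := fun a e b hab => hE _ _ _ hab.1
  have hQ' : ∀ a e b, EV E D a e b → b ∈ QV Q D := fun a e b hab =>
    (mem_QV _ _ _).2 ⟨hQ _ _ _ hab.1, hab.2.2.2.2⟩
  have hpx : (p, x) ∈ QV Q D := (mem_QV _ _ _).2 ⟨hp, hx0, hxD⟩
  have hqx := h.sub hQ' hpx h.end_mem
  rw [mem_QV] at hqx
  obtain ⟨-, hx0', hxD'⟩ := hqx
  dsimp only at hx0' hxD'
  obtain ⟨j, Lj, Sj, m, c, hj, hLj, hc, hz⟩ := h.nfV hQ' hE' hM (by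
    rintro S c ⟨r, _, _, _, _, hw⟩
    have := EV_disp hw
    omega) hpx
  have hN : 1 ≤ (QV Q D).card := Finset.card_pos.2 ⟨_, hpx⟩
  rw [QV_card] at hLj hc hN
  have hNL : Q.card * D ≤ Lam (Q.card * D) M := by
    obtain ⟨b1, _⟩ := lam_bd hN hM
    unfold Lam; nlinarith
  have hLM : 1 ≤ Lam (Q.card * D) M * M := Nat.mul_pos (by omega) hM
  have dj : nb j (Lam (Q.card * D) M * M) := nb_mono (hj.disp hE') (Nat.mul_le_mul_right M hLj)
  have dc : nb c (Lam (Q.card * D) M * M) := nb_mono (hc.disp hE') (Nat.mul_le_mul_right M hNL)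
  have hxz := EV_disp h
  dsimp only at hxz
  refine ⟨piece (x, B) (x', B) (0, 1) j 0 c, ?_, ?_, ?_⟩
  · refine BG_piece (by omega) ?_ ?_ ?_ (nb_mono dj (by omega)) (nb_zero _)
      (nb_mono dc (by omega)) <;> simp only [nb, abs_le] <;> omega
  · intro w w' l hm
    rw [mem_piece] at hm
    obtain ⟨-, s, s', K, m, p2, p3, p4, p5, h1, h2, h3, h4⟩ := hm
    have e : w' = w + j + m • c := by
      rw [h3, one_smul, smul_zero]; abel
    have e2 : w'.2 = w.2 + j.2 + m * c.2 := by rw [e]; simp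
    simp only [one_smul, Prod.ext_iff, Prod.fst_add, Prod.snd_add, Prod.fst_mul, Prod.snd_mul,
      one_mul, zero_mul] at h1 h2
    refine ⟨by omega, by omega, by omega, by omega, by omega, ?_⟩
    have dj2 := abs_le.1 dj.2
    have run := hj.runBlock hE' hc w m {x | min w.2 w'.2 - B ≤ x.2 ∧ x.2 ≤ max w.2 w'.2 + B} (by
      intro k hk x hx
      have hx := (nb_mono hx (show (Lj + Q.card * D) * M ≤ 2 * (Lam (Q.card * D) M * M) by
        have := Nat.mul_le_mul_right M (show Lj + Q.card * D ≤ 2 * Lam (Q.card * D) M by omega)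
        linarith)).2
      have := interp w.2 c.2 x.2 k m (2 * (Lam (Q.card * D) M * M)) hk (by push_cast; simpa using hx)
      show min w.2 w'.2 - B ≤ x.2 ∧ x.2 ≤ max w.2 w'.2 + B
      push_cast at this
      omega)
    rw [← e] at run
    refine (EV_lift ?_ (by dsimp only; omega) run).1
    intro c hc1 hc2 hc3
    have hc3 : min w.2 w'.2 - B ≤ c.2.2 ∧ c.2.2 ≤ max w.2 w'.2 + B := hc3
    rw [mem_box]
    omega
  · refine ⟨w.1 + w.2, ?_⟩
    rw [mem_piece]
    refine ⟨by norm_num, (0, w.2 - B), (0, (w + z).2 - B), 0, m, le_rfl, by simpa using h2,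
      le_rfl, by simpa using h3, ?_, ?_, ?_, rfl⟩
    · ext <;> simp [h1]
    · ext <;> simp [h1, hxz]
    · show w + z = w + _
      rw [hz, one_smul, smul_zero]; abel

/-- swap coordinates of a graph -/
def Es (E : ℕ → V2 → ℕ → Prop) (p : ℕ) (e : V2) (q : ℕ) : Prop := E p e.swap q

def swapG : G6 →+ G6 where
  toFun g := (g.1.swap, g.2.1.swap, g.2.2.1, g.2.2.2)
  map_zero' := rfl
  map_add' _ _ := rfl

lemma RT_swap {R : ℤ} {c c' : ℕ × V2} (h : RT (Es E) (box R) c c') :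
    RT E (box R) (c.1, c.2.swap) (c'.1, c'.2.swap) := by
  induction h with
  | refl => exact Relation.ReflTransGen.refl
  | @tail b d _ hs ih =>
  refine ih.tail ?_
  obtain ⟨p, w⟩ := b
  obtain ⟨q, w'⟩ := d
  obtain ⟨e, h1, h2, h3, h4⟩ := hs
  refine ⟨e.swap, h1, ?_, ?_, ?_⟩
  · show w'.swap = w.swap + e.swap
    have h2 : w' = w + e := h2
    rw [h2]; rfl
  · rw [mem_box] at *; exact ⟨h3.2, h3.1⟩
  · rw [mem_box] at *; exact ⟨h4.2, h4.1⟩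

lemma PR.swap {a : ℕ} {Δ : ℤ} {c c' : ℕ × V2} (h : PR (Es E) a Δ c c') :
    PR E a Δ (c.1, c.2.swap) (c'.1, c'.2.swap) := by
  obtain ⟨P, h1, h2, l, h3⟩ := h
  refine ⟨P.map swapG, ?_, ?_, l, ⟨_, h3, rfl⟩⟩
  · have := h1.map swapG (b := 1) (fun x => by
      obtain ⟨a1, a2, a3, a4, a5, a6⟩ := c6 x
      rw [one_mul]
      exact le6 _ _ a2 a1 a4 a3 a5 a6)
    rwa [one_mul] at this
  · rintro w w' l ⟨⟨x, x', k, l'⟩, hx, he⟩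
    simp only [swapG, AddMonoidHom.coe_mk, ZeroHom.coe_mk, Prod.mk.injEq] at he
    obtain ⟨rfl, rfl, rfl, rfl⟩ := he
    obtain ⟨a1, a2, a3, a4, a5, a6⟩ := h2 _ _ _ hx
    refine ⟨a2, a1, a4, a3, by simpa [add_comm] using a5, ?_⟩
    have := RT_swap a6
    rw [add_comm x'.1 x'.2] at this
    exact this

end

section
/-- chains of given length -/
def Chn {β : Type} (R : β → β → Prop) : ℕ → β → β → Prop
  | 0, a, b => a = b
  | n + 1, a, b => ∃ c, R a c ∧ Chn R n c b

lemma Chn.append {β : Type} {R : β → β → Prop} {k : ℕ} {b c : β} : ∀ {j : ℕ} {a : β},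
    Chn R j a b → Chn R k b c → Chn R (j + k) a c := by
  intro j
  induction j with
  | zero => intro a h h'; rw [Nat.zero_add]; rw [show a = b from h]; exact h'
  | succ j ih =>
    rintro a ⟨d, h1, h2⟩ h'
    rw [Nat.succ_add]
    exact ⟨d, h1, ih h2 h'⟩

lemma Chn.split {β : Type} {R : β → β → Prop} {k : ℕ} {c : β} : ∀ {j : ℕ} {a : β},
    Chn R (j + k) a c → ∃ b, Chn R j a b ∧ Chn R k b c := by
  intro j
  induction j with
  | zero => intro a h; rw [Nat.zero_add] at h; exact ⟨a, rfl, h⟩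
  | succ j ih =>
    intro a h
    rw [Nat.succ_add] at h
    obtain ⟨d, h1, h2⟩ := h
    obtain ⟨b, h3, h4⟩ := ih h2
    exact ⟨b, ⟨d, h1, h3⟩, h4⟩

lemma Chn.single {β : Type} {R : β → β → Prop} {a b : β} (h : R a b) : Chn R 1 a b := ⟨b, h, rfl⟩

lemma Chn.pad {β : Type} {R : β → β → Prop} {a b : β} (ha : R a a) {k k' : ℕ} (hk : k ≤ k')
    (h : Chn R k a b) : Chn R k' a b := by
  induction hk with
  | refl => exact h
  | step _ ih => exact ⟨a, ha, ih⟩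

variable {E : ℕ → V2 → ℕ → Prop}

lemma PR.chain {a : ℕ} (ha : 2 ≤ a) {Δ : ℤ} (d : ℕ) : ∀ {c c'}, Chn (PR E a Δ) (2 ^ d) c c' →
    PR E (a ^ 32 ^ d) Δ c c' := by
  induction d with
  | zero =>
    rintro c c' ⟨x, h1, h2⟩
    rw [show x = c' from h2] at h1
    simpa using h1
  | succ d ih =>
    intro c c' h
    rw [pow_succ, mul_two] at h
    obtain ⟨b, h1, h2⟩ := h.split
    have := (ih h1).comp (ha.trans (Nat.le_self_pow (by positivity) a)) (ih h2)
    rwa [← pow_mul, ← pow_succ] at this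

section gen
variable {α : Type} [DecidableEq α] {F : α → V2 → α → Prop}
set_option linter.unusedSectionVars false

lemma RT.end_mem {A : Set (α × V2)} {c c'} (hc : c ∈ A) (h : RT F A c c') : c' ∈ A := by
  cases h with
  | refl => exact hc
  | tail _ h => obtain ⟨_, _, _, _, h⟩ := h; exact h

lemma RT.toWk {A : Set (α × V2)} {c c'} (h : RT F A c c') :
    ∃ z L S, Wk F c.1 c'.1 z L S ∧ c'.2 = c.2 + z := by
  induction h with
  | refl => exact ⟨0, 0, _, Wk.nil _, by simp⟩
  | tail _ h ih =>
    obtain ⟨z, L, S, h1, h2⟩ := ih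
    obtain ⟨e, e1, e2, _, _⟩ := h
    exact ⟨_, _, _, h1.snoc e1, by rw [e2, h2, add_assoc]⟩

lemma RT.first {A : Set (α × V2)} (I : α × V2 → Prop) {c c'} (hc : c ∈ A) (h : RT F A c c') :
    (¬ I c ∧ RT F (A ∩ {x | ¬ I x}) c c') ∨ ∃ x ∈ A, I x ∧ RT F A x c' ∧
      (x = c ∨ (¬ I c ∧ ∃ y, RT F (A ∩ {x | ¬ I x}) c y ∧ St F A y x)) := by
  revert hc
  induction h using Relation.ReflTransGen.head_induction_on with
  | refl =>
    intro hc
    by_cases hI : I c'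
    · exact Or.inr ⟨c', hc, hI, Relation.ReflTransGen.refl, Or.inl rfl⟩
    · exact Or.inl ⟨hI, Relation.ReflTransGen.refl⟩
  | @head c d hs hd ih =>
    intro hc
    by_cases hI : I c
    · exact Or.inr ⟨c, hc, hI, hd.head hs, Or.inl rfl⟩
    · have hdA : d ∈ A := by obtain ⟨_, _, _, _, h⟩ := hs; exact h
      have step : ¬ I d → St F (A ∩ {x | ¬ I x}) c d := by
        intro hId
        obtain ⟨e, e1, e2, e3, e4⟩ := hs
        exact ⟨e, e1, e2, ⟨e3, hI⟩, ⟨e4, hId⟩⟩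
      rcases ih hdA with ⟨h1, h2⟩ | ⟨x, hx, hIx, hr, rfl | ⟨h1, y, h2, h3⟩⟩
      · exact Or.inl ⟨hI, h2.head (step h1)⟩
      · exact Or.inr ⟨x, hx, hIx, hr, Or.inr ⟨hI, c, Relation.ReflTransGen.refl, hs⟩⟩
      · exact Or.inr ⟨x, hx, hIx, hr, Or.inr ⟨hI, y, h2.head (step h1), h3⟩⟩

lemma RT.last {A : Set (α × V2)} (J : α × V2 → Prop) {x c'} (hx : x ∈ A) (hJ : J x)
    (h : RT F A x c') : ∃ y ∈ A, J y ∧ RT F A x y ∧ (y = c' ∨ ∃ z ∈ A, ¬ J z ∧ St F A y z ∧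
      RT F (A ∩ {x | ¬ J x}) z c') := by
  induction h with
  | refl => exact ⟨x, hx, hJ, Relation.ReflTransGen.refl, Or.inl rfl⟩
  | @tail b d hb hs ih =>
    obtain ⟨y, hy, hJy, hr, ho⟩ := ih
    have hdA : d ∈ A := by obtain ⟨_, _, _, _, h⟩ := hs; exact h
    by_cases hJd : J d
    · exact ⟨d, hdA, hJd, hb.tail hs, Or.inl rfl⟩
    · rcases ho with rfl | ⟨z, hz, hJz, hst, hzb⟩
      · exact ⟨y, hy, hJy, hr, Or.inr ⟨d, hdA, hJd, hs, Relation.ReflTransGen.refl⟩⟩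
      · refine ⟨y, hy, hJy, hr, Or.inr ⟨z, hz, hJz, hst, hzb.tail ?_⟩⟩
        have hbA : b ∈ A ∩ {x | ¬ J x} := RT.end_mem ⟨hz, hJz⟩ hzb
        obtain ⟨e, e1, e2, e3, e4⟩ := hs
        exact ⟨e, e1, e2, hbA, ⟨e4, hJd⟩⟩
end gen

/-- configurations outside the small box; interior ones only with states in `S` -/
def Out (Q S : Finset ℕ) (D B : ℕ) : Set (ℕ × V2) :=
  {c | NNeg c ∧ c.1 ∈ Q ∧ ¬ (c.2.1 < B ∧ c.2.2 < B) ∧ (D ≤ c.2.1 ∧ D ≤ c.2.2 → c.1 ∈ S)}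

lemma mem_Out (Q S : Finset ℕ) (D B : ℕ) (c : ℕ × V2) : c ∈ Out Q S D B ↔
    NNeg c ∧ c.1 ∈ Q ∧ ¬ (c.2.1 < B ∧ c.2.2 < B) ∧ (D ≤ c.2.1 ∧ D ≤ c.2.2 → c.1 ∈ S) := Iff.rfl

/-- standing assumptions -/
structure Ctx (E : ℕ → V2 → ℕ → Prop) (Q : Finset ℕ) (M D B : ℕ) : Prop where
  hQ : ∀ p e q, E p e q → q ∈ Q
  hE : ∀ p e q, E p e q → nb e M
  hM : 1 ≤ M
  hD : 5 * (Lam Q.card M * M) ≤ D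
  hB : 3 * (Lam (Q.card * D) M * M) ≤ B
  hDB : D + M ≤ B

variable {Q : Finset ℕ} {M D B : ℕ}

lemma Ctx.swap (h : Ctx E Q M D B) : Ctx (Es E) Q M D B where
  hQ p e q hh := h.hQ _ _ _ hh
  hE p e q hh := ⟨(h.hE _ _ _ hh).2, (h.hE _ _ _ hh).1⟩
  hM := h.hM
  hD := h.hD
  hB := h.hB
  hDB := h.hDB

lemma Ctx.vert (h : Ctx E Q M D B) {c c' : ℕ × V2} (hc : c ∈ Out Q ∅ D B) (hV : c.2.1 < D)
    (hr : RT E (Out Q ∅ D B) c c') : PR E (2 ^ 16 * B ^ 4) B c c' := by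
  have hDB := h.hDB
  have key : ∃ z L S, Wk (EV E D) (c.1, c.2.1) (c'.1, c'.2.1) z L S ∧ c'.2 = c.2 + z ∧ c'.2.1 < D := by
    induction hr with
    | refl => exact ⟨0, 0, _, Wk.nil _, by simp, hV⟩
    | @tail b d _ hs ih =>
      obtain ⟨z, L, S, h1, h2, h3⟩ := ih
      obtain ⟨e, e1, e2, e3, e4⟩ := hs
      rw [mem_Out] at e3 e4
      simp only [NNeg, Finset.notMem_empty, imp_false] at e3 e4
      have he := (h.hE _ _ _ e1).1
      rw [abs_le] at he
      have ex := congrArg Prod.fst e2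
      simp only [Prod.fst_add] at ex
      have hlt : d.2.1 < D := by omega
      refine ⟨_, _, _, h1.snoc (e := e) (r := (d.1, d.2.1)) ⟨e1, ex, ?_⟩, ?_, hlt⟩
      · dsimp only; omega
      · rw [e2, h2, add_assoc]
  have hc' := RT.end_mem hc hr
  obtain ⟨z, L, S, hw, hz, hV'⟩ := key
  rw [mem_Out] at hc hc'
  simp only [NNeg, Finset.notMem_empty, imp_false] at hc hc'
  have := PR.ofV h.hQ h.hE h.hM hw hc.2.1 hc.1.1 hV h.hB (by omega) (w := c.2) rfl
    (by omega) (by rw [← hz]; omega)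
  rw [← hz] at this
  exact this

lemma RTA_swap {A A' : Set (ℕ × V2)} (hA : ∀ c ∈ A, (c.1, c.2.swap) ∈ A') {c c' : ℕ × V2}
    (h : RT E A c c') : RT (Es E) A' (c.1, c.2.swap) (c'.1, c'.2.swap) := by
  induction h with
  | refl => exact Relation.ReflTransGen.refl
  | @tail b d _ hs ih =>
  refine ih.tail ?_
  obtain ⟨p, w⟩ := b
  obtain ⟨q, w'⟩ := d
  obtain ⟨e, h1, h2, h3, h4⟩ := hs
  refine ⟨e.swap, ?_, ?_, hA _ h3, hA _ h4⟩
  · show E p e.swap.swap q; rwa [Prod.swap_swap]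
  · show w'.swap = w.swap + e.swap
    have h2 : w' = w + e := h2
    rw [h2]; rfl

lemma Out_swap {c : ℕ × V2} (hc : c ∈ Out Q ∅ D B) : (c.1, c.2.swap) ∈ Out Q ∅ D B := by
  rw [mem_Out] at *
  simp only [NNeg, Prod.fst_swap, Prod.snd_swap] at *
  exact ⟨hc.1.symm, hc.2.1, fun h => hc.2.2.1 h.symm, fun h => hc.2.2.2 h.symm⟩

lemma Ctx.side (h : Ctx E Q M D B) {c c' : ℕ × V2} (hc : c ∈ Out Q ∅ D B)
    (hr : RT E (Out Q ∅ D B) c c') : PR E (2 ^ 16 * B ^ 4) B c c' := by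
  by_cases hV : c.2.1 < D
  · exact h.vert hc hV hr
  · have hr' := RTA_swap (fun _ => Out_swap) hr
    have := (h.swap.vert (Out_swap hc) (by
      rw [mem_Out] at hc
      have := hc.2.2.2
      simp only [Finset.notMem_empty, imp_false] at this
      simp only [Prod.fst_swap]
      omega) hr').swap
    exact this

lemma Ctx.step (h : Ctx E Q M D B) {A : Set (ℕ × V2)} (hA : ∀ c ∈ A, NNeg c) {c c' : ℕ × V2}
    (hs : St E A c c') : PR E (2 ^ 16 * B ^ 4) B c c' := by
  obtain ⟨e, e1, e2, e3, e4⟩ := hs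
  have := h.hM
  have := h.hDB
  exact PR.ofStep (by omega) (nb_mono (h.hE _ _ _ e1) (by omega)) (hA _ e3) (hA _ e4) e2 (Or.inr e1)

lemma Ctx.decomp (h : Ctx E Q M D B) (n : ℕ) : ∀ (S : Finset ℕ), S.card = n → ∀ {c c' : ℕ × V2},
    c ∈ Out Q S D B → RT E (Out Q S D B) c c' → Chn (PR E (2 ^ 16 * B ^ 4) B) (4 * n + 1) c c' := by
  have hM := h.hM
  have hDB := h.hDB
  have refl : ∀ {c : ℕ × V2}, NNeg c → PR E (2 ^ 16 * B ^ 4) B c c := fun hc => PR.refl (by omega) hc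
  have hsub : ∀ S : Finset ℕ, Out Q S D B ∩ {x | ¬ (D ≤ x.2.1 ∧ D ≤ x.2.2)} ⊆ Out Q ∅ D B := by
    rintro S x ⟨h1, h2⟩
    exact ⟨h1.1, h1.2.1, h1.2.2.1, fun h => absurd h h2⟩
  induction n with
  | zero =>
    intro S hS c c' hc hr
    rw [Finset.card_eq_zero] at hS
    subst hS
    exact Chn.single (h.side hc hr)
  | succ n ih =>
    intro S hS c c' hc hr
    have hA : ∀ c ∈ Out Q S D B, NNeg c := fun c hc => hc.1
    rcases RT.first (fun x => (D : ℤ) ≤ x.2.1 ∧ (D : ℤ) ≤ x.2.2) hc hr with ⟨h1, h2⟩ | ⟨x, hx, hIx, hxc, hcx⟩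
    · exact Chn.pad (refl hc.1) (by omega) (Chn.single (h.side (hsub S ⟨hc, h1⟩) (RT.mono (hsub S) h2)))
    · have part1 : Chn (PR E (2 ^ 16 * B ^ 4) B) 2 c x := by
        rcases hcx with rfl | ⟨h1, y, h2, h3⟩
        · exact Chn.pad (refl hc.1) (by omega) (Chn.single (refl hc.1))
        · exact (Chn.single (h.side (hsub S ⟨hc, h1⟩) (RT.mono (hsub S) h2))).append
            (Chn.single (h.step hA h3))
      have hxS : x.1 ∈ S := hx.2.2.2 hIx
      obtain ⟨y, hy, hJy, hxy, ho⟩ := RT.last (fun c => ((D : ℤ) ≤ c.2.1 ∧ (D : ℤ) ≤ c.2.2) ∧ c.1 = x.1)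
        hx ⟨hIx, rfl⟩ hxc
      obtain ⟨p, w⟩ := x
      obtain ⟨q, w'⟩ := y
      obtain ⟨hIy, hqp⟩ := hJy
      dsimp only at hqp hxS hIx hIy
      subst hqp
      have part2 : PR E (2 ^ 16 * B ^ 4) B (q, w) (q, w') := by
        obtain ⟨z, L, T, hw, hz⟩ := hxy.toWk
        have hz : w' = w + z := hz
        subst hz
        exact PR.ofI h.hQ h.hE h.hM hw hx.2.1 h.hD (by omega) hIx.1 hIx.2 hIy.1 hIy.2
      have part12 := part1.append (Chn.single part2)
      rcases ho with ho | ⟨z, hz, hJz, hyz, hzc⟩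
      · rw [ho] at part12
        exact Chn.pad (refl hc.1) (by omega) part12
      · have hsub2 : Out Q S D B ∩ {c | ¬ (((D : ℤ) ≤ c.2.1 ∧ (D : ℤ) ≤ c.2.2) ∧ c.1 = q)} ⊆
            Out Q (S.erase q) D B := by
          rintro x ⟨h1, h2⟩
          refine ⟨h1.1, h1.2.1, h1.2.2.1, fun h => ?_⟩
          rw [Finset.mem_erase]
          exact ⟨fun he => h2 ⟨h, he⟩, h1.2.2.2 h⟩
        have part3 := ih (S.erase q) (by rw [Finset.card_erase_of_mem hxS]; omega)
          (hsub2 ⟨hz, hJz⟩) (RT.mono hsub2 hzc)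
        have := (part12.append (Chn.single (h.step hA hyz))).append part3
        exact Chn.pad (refl hc.1) (by omega) this

/-- the size of the final box -/
def Rad (B Bm d : ℕ) : ℕ := (3 * (Bm + 1)) ^ 32 * ((2 ^ 16 * B ^ 4) ^ 32 ^ d) ^ 32 + 2 * Bm + B

lemma Ctx.boxed (h : Ctx E Q M D B) {d k Bm : ℕ} (hk : k ≤ 2 ^ d) {c c' : ℕ × V2} (hc : NNeg c)
    (hcB : nb c.2 Bm) (hcB' : nb c'.2 Bm) (hch : Chn (PR E (2 ^ 16 * B ^ 4) B) k c c') :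
    RT E (box (Rad B Bm d)) c c' := by
  have hM := h.hM
  have hDB := h.hDB
  have hB : 1 ≤ B := by omega
  have hB4 : 1 ≤ B ^ 4 := Nat.one_le_pow _ _ hB
  have ha : 2 ≤ 2 ^ 16 * B ^ 4 := by omega
  obtain ⟨P, h1, h2, l, h3⟩ := PR.chain ha d (Chn.pad (PR.refl hB hc) hk hch)
  obtain ⟨l', h4, h5⟩ := small_sol (Nat.one_le_pow _ _ (by omega)) h1 hcB hcB' h3
  obtain ⟨_, _, _, _, _, hr⟩ := h2 _ _ _ h4
  refine RT.mono (box_mono ?_) hr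
  have e1 := (abs_le.1 hcB'.1).2
  have e2 := (abs_le.1 hcB'.2).2
  have : ((Rad B Bm d : ℕ) : ℤ) = ((3 * (Bm + 1)) ^ 32 * ((2 ^ 16 * B ^ 4) ^ 32 ^ d) ^ 32 : ℕ) + 2 * Bm + B := by
    unfold Rad; push_cast; ring
  rw [this]
  linarith

/-- nonnegative configurations with states in `Q` -/
def NQ (Q : Finset ℕ) : Set (ℕ × V2) := {c | NNeg c ∧ c.1 ∈ Q}

theorem Ctx.main (h : Ctx E Q M D B) {d Bm : ℕ} (hd : 4 * Q.card + 3 ≤ 2 ^ d) (hBm : B ≤ Bm)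
    {u v : ℕ × V2} (hu : nb u.2 Bm) (hv : nb v.2 Bm) (hr : RT E (NQ Q) u v) (hu0 : u ∈ NQ Q) :
    RT E (box (Rad B Bm d)) u v := by
  have hA : ∀ c ∈ NQ Q, NNeg c := fun c hc => hc.1
  have hOut : ∀ c ∈ NQ Q, ¬ (c.2.1 < B ∧ c.2.2 < B) → c ∈ Out Q Q D B :=
    fun c hc hn => ⟨hc.1, hc.2, hn, fun _ => hc.2⟩
  have hv0 := RT.end_mem hu0 hr
  have key : ∃ x ∈ NQ Q, nb x.2 Bm ∧ RT E (box (Rad B Bm d)) x v ∧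
      (u = x ∨ (u ∈ Out Q Q D B ∧ ∃ y, RT E (Out Q Q D B) u y ∧ St E (NQ Q) y x)) := by
    clear hu
    revert hu0
    induction hr using Relation.ReflTransGen.head_induction_on with
    | refl => intro hu0; exact ⟨v, hv0, hv, Relation.ReflTransGen.refl, Or.inl rfl⟩
    | @head c e hs he ih =>
      intro hc0
      have he0 : e ∈ NQ Q := by obtain ⟨_, _, _, _, h⟩ := hs; exact h
      obtain ⟨x, hx, hxB, hxv, ho⟩ := ih he0
      by_cases hin : c.2.1 < B ∧ c.2.2 < B
      · have hcB : nb c.2 Bm := by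
          have := hc0.1
          simp only [NNeg] at this
          simp only [nb, abs_le]
          omega
        refine ⟨c, hc0, hcB, ?_, Or.inl rfl⟩
        refine Relation.ReflTransGen.trans ?_ hxv
        rcases ho with rfl | ⟨h1, y, h2, h3⟩
        · exact h.boxed (k := 1) (by omega) hc0.1 hcB hxB (Chn.single (h.step hA hs))
        · exact h.boxed (k := 1 + (4 * Q.card + 1) + 1) (by omega) hc0.1 hcB hxB
            (((Chn.single (h.step hA hs)).append (h.decomp _ Q rfl h1 h2)).append
              (Chn.single (h.step hA h3)))
      · have hcO := hOut c hc0 hin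
        refine ⟨x, hx, hxB, hxv, Or.inr ⟨hcO, ?_⟩⟩
        rcases ho with rfl | ⟨h1, y, h2, h3⟩
        · exact ⟨c, Relation.ReflTransGen.refl, hs⟩
        · refine ⟨y, h2.head ?_, h3⟩
          obtain ⟨e, e1, e2, e3, e4⟩ := hs
          exact ⟨e, e1, e2, hcO, h1⟩
  obtain ⟨x, hx, hxB, hxv, rfl | ⟨h1, y, h2, h3⟩⟩ := key
  · exact hxv
  · refine Relation.ReflTransGen.trans ?_ hxv
    exact h.boxed (k := (4 * Q.card + 1) + 1) (by omega) hu0.1 hu hxB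
      ((h.decomp _ Q rfl h1 h2).append (Chn.single (h.step hA h3)))

end

section
lemma chn_of_rt {β : Type} [DecidableEq β] : ∀ (n : ℕ) (S : Finset β) (R : β → β → Prop) (a b : β),
    S.card ≤ n → a ∈ S → (∀ x y, R x y → y ∈ S) → Relation.ReflTransGen R a b →
    ∃ k ≤ n, Chn R k a b := by
  intro n
  induction n with
  | zero =>
    intro S R a b h ha
    have := Finset.card_pos.2 ⟨a, ha⟩
    omega
  | succ n ih =>
    intro S R a b hS ha hR h
    have h1 : Relation.ReflTransGen (fun x y => R x y ∧ y ≠ a) a b := by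
      induction h with
      | refl => exact .refl
      | tail _ h2 ih2 =>
        rename_i c d _
        by_cases hd : d = a
        · subst hd; exact .refl
        · exact ih2.tail ⟨h2, hd⟩
    rcases Relation.ReflTransGen.cases_head h1 with h1 | ⟨c, h2, h3⟩
    · exact ⟨0, by omega, h1⟩
    · obtain ⟨k, hk, hc⟩ := ih (S.erase a) _ c b (by rw [Finset.card_erase_of_mem ha]; omega)
        (Finset.mem_erase.2 ⟨h2.2, hR _ _ h2.1⟩)
        (fun x y hxy => Finset.mem_erase.2 ⟨hxy.2, hR _ _ hxy.1⟩) h3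
      refine ⟨k + 1, by omega, c, h2.1, ?_⟩
      clear h3 h2 h1 hk
      induction k generalizing c with
      | zero => exact hc
      | succ k ihk =>
        obtain ⟨e, h4, h5⟩ := hc
        exact ⟨e, h4.1, ihk e h5⟩

lemma run_cons {T : Finset (Trans 2)} {A : Set (Vec 2)} {p q : ℕ} {u v : Vec 2} {t : Trans 2}
    {π : List (Trans 2)} : Run T A p u q v (t :: π) ↔
      t ∈ T ∧ t.1 = p ∧ u ∈ A ∧ Run T A t.2.2 (u + t.2.1) q v π := by
  have hd : ∀ l : List (Trans 2), disp (t :: l) = t.2.1 + disp l := by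
    intro l; simp [disp]
  constructor
  · rintro ⟨h1, h2, h3, h4, h5⟩
    refine ⟨h1 t (by simp), h2.1, h3, fun s hs => h1 s (by simp [hs]), h2.2, ?_, ?_, ?_⟩
    · have := h5 1 le_rfl (by simp)
      simpa [disp] using this
    · rw [h4, hd, add_assoc]
    · intro i _ hi
      have := h5 (i + 1) (by omega) (by simpa using hi)
      rw [List.take_succ_cons, hd] at this
      rwa [add_assoc]
  · rintro ⟨h0, h1, h2, h3, h4, h5, h6, h7⟩
    refine ⟨?_, ⟨h1, h4⟩, h2, ?_, ?_⟩
    · intro s hs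
      rcases List.mem_cons.1 hs with rfl | hs
      · exact h0
      · exact h3 s hs
    · rw [h6, hd, add_assoc]
    · intro i hi hi2
      obtain ⟨i, rfl⟩ : ∃ j, i = j + 1 := ⟨i - 1, by omega⟩
      rw [List.take_succ_cons, hd, ← add_assoc]
      rcases Nat.eq_zero_or_pos i with rfl | hp
      · simpa [disp] using h5
      · exact h7 i hp (by simpa using hi2)

/-- edge relation of a 2-VASS -/
def ET (T : Finset (Trans 2)) (p : ℕ) (e : V2) (q : ℕ) : Prop :=
  ∃ t ∈ T, t.1 = p ∧ t.2.2 = q ∧ e = (t.2.1 0, t.2.1 1)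

/-- coordinates as a pair -/
def pr2 (u : Vec 2) : V2 := (u 0, u 1)

lemma rt_of_run {Q : Finset ℕ} {T : Finset (Trans 2)} (hT : ∀ t ∈ T, t.1 ∈ Q ∧ t.2.2 ∈ Q) {q : ℕ}
    {v : Vec 2} : ∀ (π : List (Trans 2)) (p : ℕ) (u : Vec 2), p ∈ Q →
    Run T (NatSet 2) p u q v π → RT (ET T) (NQ Q) (p, pr2 u) (q, pr2 v) := by
  intro π
  induction π with
  | nil =>
    rintro p u _ ⟨_, h2, _, h4, _⟩
    have h2 : p = q := h2
    have h4 : v = u := by simpa [disp] using h4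
    rw [h2, h4]
  | cons t π ih =>
    intro p u hp h
    rw [run_cons] at h
    obtain ⟨h0, h1, h2, h3⟩ := h
    refine Relation.ReflTransGen.head ?_ (ih _ _ (hT t h0).2 h3)
    have h4 := h3.2.2.1
    exact ⟨pr2 t.2.1, ⟨t, h0, h1, rfl, rfl⟩, rfl, ⟨⟨h2 0, h2 1⟩, hp⟩, ⟨⟨h4 0, h4 1⟩, (hT t h0).2⟩⟩

lemma run_of_chn {T : Finset (Trans 2)} {R : ℤ} {q : ℕ} {v : Vec 2} : ∀ (k : ℕ) (p : ℕ) (u : Vec 2),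
    u ∈ NatSet 2 → Chn (St (ET T) (box R)) k (p, pr2 u) (q, pr2 v) →
    ∃ π, Run T (NatSet 2) p u q v π ∧ π.length = k := by
  intro k
  induction k with
  | zero =>
    intro p u hu h
    have h : (p, pr2 u) = (q, pr2 v) := h
    simp only [pr2, Prod.mk.injEq] at h
    obtain ⟨rfl, h1, h2⟩ := h
    refine ⟨[], ⟨by simp, rfl, hu, ?_, by simp; omega⟩, rfl⟩
    funext i
    fin_cases i <;> simp [disp, h1, h2]
  | succ k ih =>
    rintro p u hu ⟨⟨r, w⟩, ⟨e, ⟨t, h0, h1, h2, h3⟩, h4, h5, h6⟩, h7⟩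
    have hw : w = pr2 (u + t.2.1) := by
      simp only at h4
      rw [h4, h3]; rfl
    subst hw
    simp only at h2
    subst h2
    obtain ⟨π, h8, h9⟩ := ih _ (u + t.2.1) (by
      rw [mem_box] at h6
      intro i
      fin_cases i
      · exact h6.1.1
      · exact h6.2.1) h7
    exact ⟨t :: π, run_cons.2 ⟨h0, h1, hu, h8⟩, by simp [h9]⟩

lemma le_two_pow_log (y X : ℕ) (h : Nat.log 2 (y + 2) + 1 ≤ X) : y + 2 ≤ 2 ^ X :=
  (Nat.lt_pow_succ_log_self (by norm_num) _).le.trans (Nat.pow_le_pow_right (by norm_num) h)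

lemma nb_pr2 (u : Vec 2) : nb (pr2 u) (vnorm u : ℕ) := by
  have h : ∀ i, |u i| ≤ ((vnorm u : ℕ) : ℤ) := by
    intro i
    have : (u i).natAbs ≤ vnorm u := Finset.le_sup (f := fun i => (u i).natAbs) (Finset.mem_univ i)
    rw [Int.abs_eq_natAbs]
    exact_mod_cast this
  exact ⟨h 0, h 1⟩

lemma lam_pow {n M a b : ℕ} (hn : n ≤ 2 ^ a) (hM : M ≤ 2 ^ b) : Lam n M * M ≤ 2 ^ (5 + 6 * a + 5 * b) := by
  calc Lam n M * M = 32 * n ^ 6 * M ^ 5 := by unfold Lam; ring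
    _ ≤ 32 * (2 ^ a) ^ 6 * (2 ^ b) ^ 5 := by gcongr
    _ = _ := by rw [show 32 = 2 ^ 5 by norm_num, ← pow_mul, ← pow_mul, ← pow_add, ← pow_add]; congr 1; ring

lemma arith {X n B Bm d : ℕ} (hX : 4 ≤ X) (hn : n ≤ X) (hB : B ≤ 2 ^ (60 + 77 * X))
    (hBm : Bm ≤ 2 ^ (62 + 77 * X)) (hd : 2 ^ d ≤ 14 * X) :
    n * (Rad B Bm d + 1) ^ 2 ≤ 2 ^ (X ^ 40) := by
  have h1 : (3 * (Bm + 1)) ^ 32 ≤ 2 ^ (32 * (65 + 77 * X)) := by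
    rw [mul_comm 32, pow_mul]
    apply Nat.pow_le_pow_left
    have : 1 ≤ 2 ^ (62 + 77 * X) := Nat.one_le_two_pow
    rw [show 65 + 77 * X = (62 + 77 * X) + 3 by ring, pow_add]
    omega
  have h2 : 2 ^ 16 * B ^ 4 ≤ 2 ^ (256 + 308 * X) := by
    calc 2 ^ 16 * B ^ 4 ≤ 2 ^ 16 * (2 ^ (60 + 77 * X)) ^ 4 := by gcongr
      _ = _ := by rw [← pow_mul, ← pow_add]; congr 1; ring
  have h3 : 32 ^ d ≤ (14 * X) ^ 5 := by
    calc 32 ^ d = (2 ^ d) ^ 5 := by rw [← pow_mul, mul_comm, pow_mul]; norm_num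
      _ ≤ _ := Nat.pow_le_pow_left hd 5
  have h4 : ((2 ^ 16 * B ^ 4) ^ 32 ^ d) ^ 32 ≤ 2 ^ ((256 + 308 * X) * (14 * X) ^ 5 * 32) := by
    rw [pow_mul, pow_mul]
    apply Nat.pow_le_pow_left
    calc _ ≤ (2 ^ (256 + 308 * X)) ^ 32 ^ d := Nat.pow_le_pow_left h2 _
      _ ≤ _ := Nat.pow_le_pow_right (by positivity) h3
  have e1 : (256 + 308 * X) * (14 * X) ^ 5 * 32 ≤ X ^ 24 := by
    have a1 : 256 + 308 * X ≤ X ^ 6 := by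
      have : 4 ^ 5 ≤ X ^ 5 := Nat.pow_le_pow_left hX 5
      nlinarith
    have a2 : 14 * X ≤ X ^ 3 := by
      have : 4 ^ 2 ≤ X ^ 2 := Nat.pow_le_pow_left hX 2
      nlinarith
    have a3 : 32 ≤ X ^ 3 := by
      have : 4 ^ 3 ≤ X ^ 3 := Nat.pow_le_pow_left hX 3
      omega
    calc _ ≤ X ^ 6 * (X ^ 3) ^ 5 * X ^ 3 := by gcongr
      _ = _ := by ring
  have e2 : 32 * (65 + 77 * X) ≤ X ^ 24 := by
    have : 4 ^ 23 ≤ X ^ 23 := Nat.pow_le_pow_left hX 23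
    have h : X ^ 24 = X ^ 23 * X := by ring
    nlinarith
  have e3 : X ^ 24 * 4 ≤ X ^ 25 := by
    rw [pow_succ X 24]; exact Nat.mul_le_mul_left _ hX
  have e4 : 62 + 77 * X ≤ X ^ 24 := by omega
  have e5 : 60 + 77 * X ≤ X ^ 24 := by omega
  have e6 : 6 ≤ X ^ 24 := by omega
  have hp : ∀ a b, a ≤ b → 2 ^ a ≤ 2 ^ b := fun a b h => Nat.pow_le_pow_right (by norm_num) h
  have h5 : Rad B Bm d + 1 ≤ 2 ^ (X ^ 25) := by
    unfold Rad
    have g1 : (3 * (Bm + 1)) ^ 32 * ((2 ^ 16 * B ^ 4) ^ 32 ^ d) ^ 32 ≤ 2 ^ (X ^ 24 * 2) := by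
      calc _ ≤ 2 ^ (X ^ 24) * 2 ^ (X ^ 24) := Nat.mul_le_mul (h1.trans (hp _ _ e2)) (h4.trans (hp _ _ e1))
        _ = _ := by rw [← pow_add]; congr 1; ring
    have g2 := hBm.trans (hp _ (X ^ 24 * 2) (by omega))
    have g3 := hB.trans (hp _ (X ^ 24 * 2) (by omega))
    have g4 : 1 ≤ 2 ^ (X ^ 24 * 2) := Nat.one_le_two_pow
    have g5 : 2 ^ (X ^ 24 * 2 + 3) ≤ 2 ^ (X ^ 25) := hp _ _ (by omega)
    rw [pow_add] at g5
    omega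
  have e7 : X ^ 25 * 4 ≤ X ^ 40 := by
    calc X ^ 25 * 4 ≤ X ^ 25 * X := by gcongr
      _ = X ^ 26 := by ring
      _ ≤ _ := Nat.pow_le_pow_right (by omega) (by norm_num)
  have e8 : X ≤ X ^ 25 := Nat.le_self_pow (by norm_num) X
  calc n * (Rad B Bm d + 1) ^ 2 ≤ 2 ^ (X ^ 25) * (2 ^ (X ^ 25)) ^ 2 := by
        gcongr
        exact hn.trans (e8.trans Nat.lt_two_pow_self.le)
    _ = 2 ^ (X ^ 25 * 3) := by rw [← pow_mul, ← pow_add]; congr 1; ring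
    _ ≤ _ := hp _ _ (by omega)

theorem final (Q : Finset ℕ) (T : Finset (Trans 2)) (hT : ∀ t ∈ T, t.1 ∈ Q ∧ t.2.2 ∈ Q)
    (p q : ℕ) (u v : Vec 2) (h : Reach T (NatSet 2) p u q v) :
        ∃ π, Run T (NatSet 2) p u q v π ∧
          π.length ≤
            2 ^ ((Q.card + T.card + Nat.log 2 (tnorm T + 2) +
                  Nat.log 2 (vnorm u + 2) + Nat.log 2 (vnorm v + 2)) ^ 40) := by
  obtain ⟨π, hπ⟩ := h
  by_cases hp : p ∈ Q
  swap
  · cases π with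
    | nil => exact ⟨[], hπ, by simp⟩
    | cons t π =>
      rw [run_cons] at hπ
      exact absurd (hπ.2.1 ▸ (hT t hπ.1).1) hp
  have hl : ∀ y, 1 ≤ Nat.log 2 (y + 2) := fun y => Nat.log_pos (by norm_num) (by omega)
  have l1 := hl (tnorm T)
  have l2 := hl (vnorm u)
  have l3 := hl (vnorm v)
  have hn : 1 ≤ Q.card := Finset.card_pos.2 ⟨p, hp⟩
  set X := Q.card + T.card + Nat.log 2 (tnorm T + 2) +
                  Nat.log 2 (vnorm u + 2) + Nat.log 2 (vnorm v + 2) with hX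
  have b1 := le_two_pow_log (tnorm T) X (by omega)
  have b2 := le_two_pow_log (vnorm u) X (by omega)
  have b3 := le_two_pow_log (vnorm v) X (by omega)
  have hX4 : 4 ≤ X := by omega
  have hnX : Q.card ≤ X := by omega
  clear_value X
  have hn2 : Q.card ≤ 2 ^ X := hnX.trans Nat.lt_two_pow_self.le
  obtain ⟨M, hM⟩ : ∃ M, M = tnorm T + 1 := ⟨_, rfl⟩
  obtain ⟨D, hD⟩ : ∃ D, D = 5 * (Lam Q.card M * M) := ⟨_, rfl⟩
  obtain ⟨B, hB⟩ : ∃ B, B = 3 * (Lam (Q.card * D) M * M) + D + M := ⟨_, rfl⟩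
  obtain ⟨Bm, hBm⟩ : ∃ Bm, Bm = B + vnorm u + vnorm v := ⟨_, rfl⟩
  obtain ⟨d, hd⟩ : ∃ d, d = Nat.log 2 (4 * Q.card + 3) + 1 := ⟨_, rfl⟩
  have hM2 : M ≤ 2 ^ X := by omega
  have hD2 : D ≤ 2 ^ (8 + 11 * X) := by
    have := lam_pow hn2 hM2
    rw [show 8 + 11 * X = (5 + 6 * X + 5 * X) + 3 by ring, pow_add]
    omega
  have hnD : Q.card * D ≤ 2 ^ (8 + 12 * X) := by
    calc _ ≤ 2 ^ X * 2 ^ (8 + 11 * X) := Nat.mul_le_mul hn2 hD2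
      _ = _ := by rw [← pow_add]; congr 1; ring
  have hpw : ∀ a b, a ≤ b → 2 ^ a ≤ 2 ^ b := fun a b h => Nat.pow_le_pow_right (by norm_num) h
  have hB2 : B ≤ 2 ^ (60 + 77 * X) := by
    have g1 := lam_pow hnD hM2
    have g2 := g1.trans (hpw _ (57 + 77 * X) (by omega))
    have g3 := hD2.trans (hpw _ (57 + 77 * X) (by omega))
    have g4 := hM2.trans (hpw _ (57 + 77 * X) (by omega))
    rw [show 60 + 77 * X = (57 + 77 * X) + 3 by ring, pow_add]
    omega
  have hBm2 : Bm ≤ 2 ^ (62 + 77 * X) := by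
    have g3 := hpw X (60 + 77 * X) (by omega)
    rw [show 62 + 77 * X = (60 + 77 * X) + 2 by ring, pow_add]
    omega
  have hd2 : 2 ^ d ≤ 14 * X := by
    have := Nat.pow_log_le_self 2 (x := 4 * Q.card + 3) (by omega)
    rw [hd, pow_succ]
    omega
  have hd1 : 4 * Q.card + 3 ≤ 2 ^ d := by
    rw [hd]; exact (Nat.lt_pow_succ_log_self (by norm_num) _).le
  have hQE : ∀ p e q, ET T p e q → q ∈ Q := by
    rintro p e q ⟨t, ht, _, rfl, _⟩
    exact (hT t ht).2
  have ctx : Ctx (ET T) Q M D B :=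
    { hQ := hQE
      hE := by
        rintro p e q ⟨t, ht, _, _, rfl⟩
        have : vnorm t.2.1 ≤ tnorm T := Finset.le_sup (f := fun t : Trans 2 => vnorm t.2.1) ht
        exact nb_mono (nb_pr2 t.2.1) (by exact_mod_cast (by omega : vnorm t.2.1 ≤ M))
      hM := by omega
      hD := hD.ge
      hB := by omega
      hDB := by omega }
  have hu := hπ.2.2.1
  have hr := rt_of_run hT π p u hp hπ
  have hm := ctx.main hd1 (show B ≤ Bm by omega)
    (nb_mono (nb_pr2 u) (by exact_mod_cast (by omega : vnorm u ≤ Bm)))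
    (nb_mono (nb_pr2 v) (by exact_mod_cast (by omega : vnorm v ≤ Bm))) hr ⟨⟨hu 0, hu 1⟩, hp⟩
  have hRB : Bm ≤ Rad B Bm d := by unfold Rad; omega
  have har := arith hX4 hnX hB2 hBm2 hd2
  generalize Rad B Bm d = R at hm hRB har
  have hub : nb (pr2 u) R := nb_mono (nb_pr2 u) (by exact_mod_cast (by omega : vnorm u ≤ R))
  obtain ⟨k, hk, hc⟩ := chn_of_rt _ (Q ×ˢ (Finset.Icc (0:ℤ) R ×ˢ Finset.Icc (0:ℤ) R))
    (St (ET T) (box R)) _ _ le_rfl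
    (by
      simp only [Finset.mem_product, Finset.mem_Icc]
      exact ⟨hp, ⟨hu 0, (le_abs_self _).trans hub.1⟩, hu 1, (le_abs_self _).trans hub.2⟩)
    (by
      rintro x y ⟨e, h1, h2, h3, h4⟩
      simp only [Finset.mem_product, Finset.mem_Icc]
      exact ⟨hQE _ _ _ h1, h4⟩) hm
  obtain ⟨π', h1, h2⟩ := run_of_chn k p u hu hc
  refine ⟨π', h1, ?_⟩
  rw [h2]
  refine hk.trans (le_trans (le_of_eq ?_) har)
  simp only [Finset.card_product, Int.card_Icc]
  rw [show ((R:ℤ) + 1 - 0).toNat = R + 1 by omega]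
  ring

end

/-- If `q(v)` is reachable from `p(u)` in a 2-VASS then it is
reachable by a run whose length is at most exponential in the sizes of the
binary encodings of the 2-VASS and of `u` and `v`. -/
theorem statement16 :
    ∃ c : ℕ, ∀ (Q : Finset ℕ) (T : Finset (Trans 2)),
      (∀ t ∈ T, t.1 ∈ Q ∧ t.2.2 ∈ Q) →
      ∀ (p q : ℕ) (u v : Vec 2),
        Reach T (NatSet 2) p u q v →
        ∃ π, Run T (NatSet 2) p u q v π ∧
          π.length ≤
            2 ^ ((Q.card + T.card + Nat.log 2 (tnorm T + 2) +
                  Nat.log 2 (vnorm u + 2) + Nat.log 2 (vnorm v + 2)) ^ c) := by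
  exact ⟨40, final⟩

end VASS
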